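/- arXiv:1710.10838 — 2 statements merged into one kernel-verified Lean document; each statement's English description precedes it below -/
import Mathlib

section
/- If H is a finite group with a normal subgroup M ≠ 1 such that H/M ≅ A_k (the alternating group of degree k), k > 20, the extension 1 → M → H → A_k → 1 is nonsplit (no subgroup of H maps isomorphically onto A_k under the quotient map), and H embeds into a symmetric group S_ℓ, then ℓ ≥ k(k-1). -/
/-!
Replace `H` by a minimal supplement `L` of `M`: the kernel `N` of `L → A_n` then lies in the
Frattini subgroup of `L`, so `N` is solvable and `L` is perfect, and `N ≠ 1` because the extension
is nonsplit. In a faithful permutation representation of `L` some point stabilizer `X` does not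
contain `N`.

If `X` has index less than `n (n - 1)`, its image in `A_n` has at most half that index, so less than
`n.choose 2`. By Bochert's argument a subgroup of such small index contains a 3-cycle. If it fixes
no point, counting blocks makes it primitive, hence all of `A_n` by Jordan's theorem; as `X` is
proper and `N` consists of nongenerators, `X` must therefore lie in a stabilizer `Y` of one of the
`n` points. If moreover `X` has index less than `n - 1` in `Y`, then `Y / N ≅ A_{n-1}` is too large
to act on the cosets of `X`, so the normal core of `X` supplements `N` in `Y`. The resulting
solvable quotient of `Y` has a character with values in some `𝔽_p` that is nontrivial on `N`.

There is no such character. By Shapiro's lemma it comes from a cocycle `c : L → 𝔽_p^n`, whose values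
on `N` form a submodule of the permutation module. A submodule with a nonconstant vector contains
all vectors of coordinate sum zero, hence all values of `c` since `L` is perfect; as `N` lies in the
Frattini subgroup, this forces `c = 0`. So `c m` is constant for each `m ∈ N`, and the differences
`c h i - c h j` vanish on two-point stabilizers, which are perfect modulo `N`. They therefore form a
coboundary, which by triple transitivity makes `c` itself a coboundary plus a homomorphism to `𝔽_p`,
and both of these vanish on `N`.
-/

open Equiv MulAction
open scoped Pointwise commutatorElement

section Bochert

open scoped Nat

variable {α : Type*}

/-- A base of a permutation group, in the sense of computational group theory: a set of points
whose pointwise stabilizer in the group is trivial. -/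
def IsBase (G : Subgroup (Perm α)) (Δ : Finset α) : Prop :=
  ∀ g ∈ G, (∀ x ∈ Δ, g x = x) → g = 1

theorem IsBase.card_le [Fintype α] {G : Subgroup (Perm α)} {Δ : Finset α} (hΔ : IsBase G Δ) :
    Nat.card G ≤ (Fintype.card α).descFactorial Δ.card := by
  let restrict (g : G) : Δ ↪ α := (Function.Embedding.subtype _).trans (g : Perm α).toEmbedding
  have hinj : Function.Injective restrict := fun g h hgh ↦ by
    refine (inv_mul_eq_one.mp (Subtype.ext (hΔ _ (h⁻¹ * g).2 fun x hx ↦ ?_))).symm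
    have hx' : (g : Perm α) x = (h : Perm α) x := DFunLike.congr_fun hgh ⟨x, hx⟩
    simp [hx']
  simpa [Nat.card_eq_fintype_card, Fintype.card_embedding_eq] using
    Nat.card_le_card_of_injective restrict hinj

theorem IsBase.factorial_le_index [Fintype α] {G : Subgroup (Perm α)} {Δ : Finset α}
    (hΔ : IsBase G Δ) : (Fintype.card α - Δ.card)! ≤ G.index := by
  have hcard : Nat.card G * G.index = (Fintype.card α)! := by
    rw [G.card_mul_index, Nat.card_perm, Nat.card_eq_fintype_card]
  refine Nat.le_of_mul_le_mul_left ?_ (Nat.descFactorial_pos.mpr Δ.card_le_univ)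
  calc (Fintype.card α).descFactorial Δ.card * (Fintype.card α - Δ.card)!
      = Nat.card G * G.index := by
        rw [mul_comm, Nat.factorial_mul_descFactorial Δ.card_le_univ, hcard]
    _ ≤ _ := Nat.mul_le_mul_right _ hΔ.card_le

variable [DecidableEq α]

theorem commutatorElement_eq_swap_mul_swap {g h : Perm α} {δ : α} (hδ : h δ ≠ δ)
    (hgh : ∀ x ≠ δ, g x = x ∨ h x = x) : ⁅g, h⁆ = swap (h δ) (g δ) * swap (h δ) δ := by
  have hghδ : g (h δ) = h δ := (hgh _ hδ).resolve_right fun hh ↦ hδ (h.injective hh)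
  -- `h'` fixes `δ`, the only point at which the supports of `g` and `h` can meet.
  let h' : Perm α := swap δ (h δ) * h
  have hcomm : Commute g h' := Perm.Disjoint.commute fun x ↦ by
    rcases eq_or_ne x δ with rfl | hx
    · simp [h']
    refine (hgh x hx).imp_right fun hhx ↦ ?_
    have hxδ : x ≠ h δ := fun hx' ↦ hx (h.injective (hhx.trans hx'))
    simp [h', hhx, swap_apply_of_ne_of_ne hx hxδ]
  have hh : h = swap δ (h δ) * h' := by simp [h']
  calc ⁅g, h⁆ = g * swap δ (h δ) * (h' * g⁻¹) * h'⁻¹ * (swap δ (h δ))⁻¹ := by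
        rw [commutatorElement_def]; nth_rw 1 2 [hh]; group
    _ = g * swap δ (h δ) * g⁻¹ * swap δ (h δ) := by
        rw [← hcomm.inv_left.eq]; simp [mul_assoc]
    _ = swap (h δ) (g δ) * swap (h δ) δ := by
        rw [← swap_apply_apply, hghδ, swap_comm, swap_comm δ]

variable [Fintype α]

theorem isThreeCycle_commutatorElement {g h : Perm α} {δ : α} (hgδ : g δ ≠ δ) (hhδ : h δ ≠ δ)
    (hgh : ∀ x ≠ δ, g x = x ∨ h x = x) : ⁅g, h⁆.IsThreeCycle := by
  rw [commutatorElement_eq_swap_mul_swap hhδ hgh]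
  refine Perm.isThreeCycle_swap_mul_swap_same (fun heq ↦ ?_) hhδ hgδ
  rcases hgh _ hgδ with hg | hh
  · exact hgδ (g.injective hg)
  · exact hhδ (h.injective (by rw [heq, hh]))

theorem IsBase.exists_isThreeCycle {G : Subgroup (Perm α)} {Δ : Finset α} (hΔ : IsBase G Δ)
    (hmin : ∀ δ ∈ Δ, ¬ IsBase G (Δ.erase δ)) (hcompl : ¬ IsBase G Δᶜ) :
    ∃ g ∈ G, g.IsThreeCycle := by
  simp only [IsBase, not_forall] at hmin hcompl
  obtain ⟨g, hg, hgfix, hg1⟩ := hcompl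
  obtain ⟨δ, hgδ⟩ : ∃ δ, g δ ≠ δ := by
    by_contra! hfix
    exact hg1 (Perm.ext hfix)
  have hδ : δ ∈ Δ := by
    by_contra hδ
    exact hgδ (hgfix δ (Finset.mem_compl.mpr hδ))
  obtain ⟨h, hh, hhfix, hh1⟩ := hmin δ hδ
  have hhδ : h δ ≠ δ := fun hhδ ↦ hh1 <| hΔ h hh fun x hx ↦ by
    rcases eq_or_ne x δ with rfl | hxδ
    · exact hhδ
    · exact hhfix x (Finset.mem_erase.mpr ⟨hxδ, hx⟩)
  refine ⟨⁅g, h⁆, ?_, isThreeCycle_commutatorElement hgδ hhδ fun x hx ↦ ?_⟩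
  · exact G.mul_mem (G.mul_mem (G.mul_mem hg hh) (G.inv_mem hg)) (G.inv_mem hh)
  · by_cases hxΔ : x ∈ Δ
    · exact .inr (hhfix x (Finset.mem_erase.mpr ⟨hx, hxΔ⟩))
    · exact .inl (hgfix x (Finset.mem_compl.mpr hxΔ))

theorem exists_isThreeCycle_of_index_lt_factorial {G : Subgroup (Perm α)}
    (hG : G.index < ((Fintype.card α + 1) / 2)!) : ∃ g ∈ G, g.IsThreeCycle := by
  have hlarge {Δ : Finset α} (hΔ : IsBase G Δ) : Fintype.card α / 2 < Δ.card := by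
    by_contra! hle
    exact (hΔ.factorial_le_index.trans_lt hG).not_ge (Nat.factorial_le (by omega))
  have huniv : IsBase G Finset.univ := fun g _ hfix ↦ Perm.ext fun x ↦ hfix x (Finset.mem_univ x)
  obtain ⟨Δ, hΔ, hmin⟩ := exists_minimal_of_wellFoundedLT (IsBase G) ⟨_, huniv⟩
  refine hΔ.exists_isThreeCycle (fun δ hδ hbase ↦ ?_) fun hbase ↦ ?_
  · exact Finset.notMem_erase δ Δ (hmin hbase (Δ.erase_subset δ) hδ)
  · have := hlarge hΔ
    have := hlarge hbase
    have := Δ.card_add_card_compl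
    omega

end Bochert

section SmallIndex

open scoped Nat

theorem choose_le_choose_of_add_le {n r s : ℕ} (hrs : r ≤ s) (hn : s + r ≤ n) :
    n.choose r ≤ n.choose s := by
  have hmono : ∀ t, r ≤ t → t ≤ n / 2 → n.choose r ≤ n.choose t := fun t hrt ↦ by
    induction t, hrt using Nat.le_induction with
    | base => exact fun _ ↦ le_rfl
    | succ t _ ih =>
      exact fun ht ↦ (ih (by omega)).trans (Nat.choose_le_succ_of_lt_half_left (by omega))
  rcases le_or_gt s (n / 2) with hs | hs
  · exact hmono s hrs hs
  · rw [← Nat.choose_symm (show s ≤ n by omega)]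
    exact hmono _ (by omega) (by omega)

theorem ncard_orbit_mul_index {S X : Type*} [Group S] [MulAction S X] (G : Subgroup S) (x : X) :
    (orbit G x).ncard * G.index = G.relIndex (stabilizer S x) * (stabilizer S x).index := by
  have horbit : (stabilizer S x).relIndex G = (orbit G x).ncard := by
    rw [← index_stabilizer]; rfl
  rw [← horbit, ← Subgroup.inf_relIndex_right, Subgroup.relIndex_mul_index inf_le_right,
    ← Subgroup.relIndex_mul_index (inf_le_left (b := G)), Subgroup.inf_relIndex_left]

variable {α : Type*} [Fintype α] [DecidableEq α]

theorem index_stabilizer_alternatingGroup (hα : 3 ≤ Nat.card α) (B : Set α) :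
    (stabilizer (alternatingGroup α) B).index = (Nat.card α).choose B.ncard := by
  classical
  let s : Set.powersetCard α B.ncard :=
    ⟨B.toFinset, by rw [Set.powersetCard.mem_iff, Set.ncard_eq_toFinset_card']⟩
  have hsB : (s : Set α) = B := by ext; simp [s]
  have hs : stabilizer (alternatingGroup α) s = stabilizer (alternatingGroup α) (s : Set α) :=
    Set.powersetCard.stabilizer_coe s
  have := Set.powersetCard.isPretransitive_alternatingGroup (n := B.ncard) hα
  rw [← hsB, ← hs, index_stabilizer_of_transitive, Set.powersetCard.card, hsB]

theorem support_subset_of_isBlock {G : Type*} [Group G] [MulAction G α] {B : Set α}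
    (hB : IsBlock G B) {g : G} (hg : (toPerm g : Perm α).IsCycle)
    (hcard : (toPerm g : Perm α).support.card < 2 * B.ncard) {x : α} (hx : x ∈ B)
    (hgx : g • x ≠ x) : ((toPerm g : Perm α).support : Set α) ⊆ B := by
  rcases isBlock_iff_smul_eq_or_disjoint.mp hB g with hgB | hdisj
  · intro y hy
    obtain ⟨i, rfl⟩ := hg.exists_zpow_eq (x := x) hgx (Perm.mem_support.mp hy)
    have hi : g ^ i • B = B := zpow_mem (K := stabilizer G B) hgB i
    rw [← hi, ← toPermHom_apply, ← map_zpow]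
    exact Set.smul_mem_smul_set hx
  · have hmove : ∀ y ∈ B, g • y ≠ y := fun y hy hgy ↦
      Set.disjoint_left.mp hdisj ⟨y, hy, hgy⟩ hy
    have hsub : g • B ∪ B ⊆ (toPerm g : Perm α).support := by
      rintro y (⟨z, hz, rfl⟩ | hy)
      · simpa using hmove z hz
      · simpa using hmove y hy
    have hle := Set.ncard_le_ncard hsub
    rw [Set.ncard_union_eq hdisj, Set.ncard_smul_set, Set.ncard_coe_finset] at hle
    omega

variable {G : Subgroup (alternatingGroup α)}

theorem index_eq_of_isBlock [IsPretransitive G α] (hα : 3 ≤ Nat.card α) {B : Set α}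
    (hB : IsBlock G B) (hne : B.Nonempty) :
    G.index = G.relIndex (stabilizer (alternatingGroup α) B) *
      (Nat.card α - 1).choose (B.ncard - 1) := by
  have hpos : 0 < B.ncard := (Set.ncard_pos).mpr hne
  have horbit := hB.ncard_block_mul_ncard_orbit_eq hne
  have hindex := ncard_orbit_mul_index G B
  rw [index_stabilizer_alternatingGroup hα] at hindex
  have hchoose := Nat.add_one_mul_choose_eq (Nat.card α - 1) (B.ncard - 1)
  rw [Nat.sub_add_cancel (by omega), Nat.sub_add_cancel hpos] at hchoose
  refine Nat.eq_of_mul_eq_mul_left (show 0 < Nat.card α by omega) ?_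
  calc Nat.card α * G.index = B.ncard * ((orbit G B).ncard * G.index) := by
        rw [← mul_assoc, horbit]
    _ = _ := by rw [hindex, mul_left_comm, mul_comm B.ncard, ← hchoose, mul_left_comm]

theorem not_stabilizer_le [IsPretransitive G α] (hG : G ≠ ⊤) {B : Set α} (hB : B.Nontrivial)
    (hcard : B.ncard < Bᶜ.ncard) : ¬ stabilizer (alternatingGroup α) B ≤ G := by
  intro hle
  rcases (alternatingGroup.isCoatom_stabilizer_of_ncard_lt_ncard_compl hB hcard).le_iff.mp hle
    with rfl | rfl
  · exact hG rfl
  · obtain ⟨x, hx⟩ := hB.nonempty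
    obtain ⟨y, hy⟩ := (Set.ncard_pos).mp (hcard.trans_le' (Nat.zero_le _))
    obtain ⟨⟨g, hg⟩, rfl⟩ := exists_smul_eq (stabilizer (alternatingGroup α) B) x y
    exact hy ((mem_stabilizer_set.mp hg x).mpr hx)

theorem mul_pred_le_factorial {n : ℕ} (hn : 9 ≤ n) : n * (n - 1) ≤ ((n + 1) / 2)! := by
  have hfact : ∀ m, 5 ≤ m → 2 * m * (2 * m - 1) ≤ m ! := fun m hm ↦ by
    induction m, hm using Nat.le_induction with
    | base => decide
    | succ m hm ih =>
      rw [Nat.factorial_succ]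
      refine le_trans ?_ (Nat.mul_le_mul_left (m + 1) ih)
      obtain ⟨m, rfl⟩ := Nat.exists_eq_add_of_le' hm
      rw [show 2 * (m + 5 + 1) - 1 = 2 * m + 11 by omega,
        show 2 * (m + 5) - 1 = 2 * m + 9 by omega]
      have : 2 * m + 11 ≤ (m + 5) * (2 * m + 9) := by nlinarith
      linarith [Nat.mul_le_mul_left (2 * (m + 6)) this]
  exact (Nat.mul_le_mul (by omega) (by omega)).trans (hfact ((n + 1) / 2) (by omega))

theorem exists_isThreeCycle_of_index_lt_choose_two (hα : 9 ≤ Nat.card α)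
    (hG : G.index < (Nat.card α).choose 2) : ∃ g ∈ G, (g : Perm α).IsThreeCycle := by
  have : Nontrivial α := Finite.one_lt_card_iff_nontrivial.mp (by omega)
  have hindex : (G.map (alternatingGroup α).subtype).index < ((Nat.card α + 1) / 2)! := by
    rw [Subgroup.index_map_subtype, alternatingGroup.index_eq_two]
    refine lt_of_lt_of_le ?_ (mul_pred_le_factorial hα)
    rw [Nat.choose_two_right, Nat.lt_div_iff_mul_lt' (Nat.even_mul_pred_self _).two_dvd] at hG
    omega
  rw [Nat.card_eq_fintype_card] at hindex
  obtain ⟨_, ⟨g, hg, rfl⟩, h3⟩ := exists_isThreeCycle_of_index_lt_factorial hindex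
  exact ⟨g, hg, h3⟩

theorem isPretransitive_of_index_lt_choose_two (hα : 3 ≤ Nat.card α)
    (hG : G.index < (Nat.card α).choose 2) (hfix : ∀ i, ∃ g ∈ G, (g : Perm α) i ≠ i) :
    IsPretransitive G α := by
  have htwo : ∀ B : Set α, B.Nonempty → G ≤ stabilizer (alternatingGroup α) B → 2 ≤ B.ncard := by
    rintro B ⟨x, hx⟩ hGB
    obtain ⟨g, hg, hgx⟩ := hfix x
    exact (Set.one_lt_ncard).mpr ⟨x, hx, _, (mem_stabilizer_set.mp (hGB hg) x).mpr hx, hgx.symm⟩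
  have : Nonempty α := (Nat.card_pos_iff.mp (by omega)).1
  let x := Classical.arbitrary α
  have hstab : G ≤ stabilizer (alternatingGroup α) (orbit G x) := fun g hg ↦
    smul_orbit (⟨g, hg⟩ : G) x
  rw [isPretransitive_iff_orbit_eq_univ x, ← Set.compl_empty_iff, ← Set.not_nonempty_iff_eq_empty]
  intro hcompl
  have hB := htwo _ (nonempty_orbit x) hstab
  have hBc := htwo _ hcompl (by rwa [stabilizer_compl])
  have hsum := Set.ncard_add_ncard_compl (orbit G x)
  have hindex := Nat.le_of_dvd (Nat.pos_of_ne_zero G.index_ne_zero_of_finite)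
    (Subgroup.index_dvd_of_le hstab)
  rw [index_stabilizer_alternatingGroup hα] at hindex
  exact (hindex.trans_lt hG).not_ge (choose_le_choose_of_add_le hB (by omega))

theorem choose_two_le_two_mul_choose_two_pred {n : ℕ} (hn : 4 ≤ n) :
    n.choose 2 ≤ 2 * (n - 1).choose 2 := by
  obtain ⟨m, rfl⟩ := Nat.exists_eq_add_of_le' (show 1 ≤ n by omega)
  have : m.choose 1 ≤ m.choose 2 := choose_le_choose_of_add_le (by simp) (by omega)
  have : (m + 1).choose 2 = m.choose 1 + m.choose 2 := Nat.choose_succ_succ' m 1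
  rw [Nat.add_sub_cancel]
  omega

theorem choose_two_le_choose_three_pred {n : ℕ} (hn : 9 ≤ n) :
    n.choose 2 ≤ (n - 1).choose 3 := by
  have : (n - 1).choose 3 * 3 = (n - 1).choose 2 * (n - 1 - 2) := Nat.choose_succ_right_eq _ 2
  have := Nat.mul_le_mul_left ((n - 1).choose 2) (show 6 ≤ n - 1 - 2 by omega)
  have := choose_two_le_two_mul_choose_two_pred (show 4 ≤ n by omega)
  omega

theorem ncard_ne_two_of_isBlock [IsPretransitive G α] {B : Set α} (hB : IsBlock G B)
    {g : alternatingGroup α} (hg : g ∈ G) (hg3 : (g : Perm α).IsThreeCycle) : B.ncard ≠ 2 := by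
  intro h2
  obtain ⟨x, hx⟩ : (g : Perm α).support.Nonempty :=
    Finset.nonempty_iff_ne_empty.mpr (Perm.support_eq_empty_iff.not.mpr hg3.ne_one)
  obtain ⟨b, hb⟩ := (Set.ncard_pos).mp (h2.trans_gt two_pos)
  obtain ⟨t, rfl⟩ := exists_smul_eq G b x
  have hsub := support_subset_of_isBlock (hB.translate t) (g := (⟨g, hg⟩ : G)) hg3.isCycle
    (by rw [Set.ncard_smul_set, h2]; exact hg3.card_support.trans_lt (by norm_num))
    (Set.smul_mem_smul_set hb) (Perm.mem_support.mp hx)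
  have hcard := Set.ncard_le_ncard hsub
  rw [Set.ncard_smul_set, Set.ncard_coe_finset, h2] at hcard
  exact absurd (hg3.card_support.symm.trans_le hcard) (by norm_num)

theorem isPreprimitive_of_index_lt_choose_two [IsPretransitive G α] (hα : 9 ≤ Nat.card α)
    (hG : G.index < (Nat.card α).choose 2) (htop : G ≠ ⊤) : IsPreprimitive G α := by
  refine ⟨fun {B} hB ↦ ?_⟩
  rw [IsTrivialBlock, or_iff_not_imp_left, Set.not_subsingleton_iff]
  refine fun hnt ↦ by_contra fun huniv ↦ ?_
  have hle : B.ncard * 2 ≤ Nat.card α := not_lt.mp fun hlt ↦ huniv (hB.eq_univ_of_card_lt hlt)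
  have hindex := index_eq_of_isBlock (by omega) hB hnt.nonempty
  have hsum := Set.ncard_add_ncard_compl B
  obtain h2 | h3 | h4 : B.ncard = 2 ∨ B.ncard = 3 ∨ 4 ≤ B.ncard := by
    have := (Set.one_lt_ncard_iff_nontrivial (s := B)).mpr hnt
    omega
  · obtain ⟨g, hg, hg3⟩ := exists_isThreeCycle_of_index_lt_choose_two hα hG
    exact (ncard_ne_two_of_isBlock hB hg hg3 h2).elim
  · have hrel : G.relIndex (stabilizer (alternatingGroup α) B) ≠ 1 := by
      rw [Ne, Subgroup.relIndex_eq_one]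
      exact not_stabilizer_le htop hnt (by omega)
    have hrel0 : G.relIndex (stabilizer (alternatingGroup α) B) ≠ 0 := fun h0 ↦ by
      exact G.index_ne_zero_of_finite (by simpa [h0] using hindex)
    have := choose_two_le_two_mul_choose_two_pred (show 4 ≤ Nat.card α by omega)
    have := Nat.mul_le_mul_right ((Nat.card α - 1).choose 2)
      (show 2 ≤ G.relIndex (stabilizer (alternatingGroup α) B) by omega)
    rw [h3, Nat.add_one_sub_one] at hindex
    omega
  · have hle := choose_le_choose_of_add_le (n := Nat.card α - 1)
      (show 3 ≤ B.ncard - 1 by omega) (by omega)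
    have := choose_two_le_choose_three_pred hα
    have hdvd := Nat.le_of_dvd (Nat.pos_of_ne_zero G.index_ne_zero_of_finite)
      (Dvd.intro_left _ hindex.symm)
    omega

theorem exists_fixed_point_of_index_lt_choose_two (hα : 9 ≤ Nat.card α)
    (hG : G.index < (Nat.card α).choose 2) (htop : G ≠ ⊤) :
    ∃ i, ∀ g ∈ G, (g : Perm α) i = i := by
  by_contra! hfix
  have := isPretransitive_of_index_lt_choose_two (by omega) hG hfix
  have := isPreprimitive_of_index_lt_choose_two hα hG htop
  obtain ⟨g, hg, hg3⟩ := exists_isThreeCycle_of_index_lt_choose_two hα hG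
  let toMap := (alternatingGroup α).subtype.subgroupMap G
  let f : α →ₑ[toMap] α := { toFun := id, map_smul' := fun _ _ ↦ rfl }
  have hprim : IsPreprimitive (G.map (alternatingGroup α).subtype) α :=
    IsPreprimitive.of_surjective (f := f) Function.surjective_id
  have hle := Perm.alternatingGroup_le_of_isPreprimitive_of_isThreeCycle_mem hprim hg3
    (Subgroup.mem_map_of_mem _ hg)
  refine htop (eq_top_iff.mpr fun σ _ ↦ ?_)
  simpa using hle σ.2

end SmallIndex

section Frattini

theorem monoidHom_eq_one_of_commutator_eq_top {P A : Type*} [Group P] [CommGroup A]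
    (hP : commutator P = ⊤) (g : P →* A) : g = 1 :=
  MonoidHom.ext fun x ↦
    Abelianization.commutator_subset_ker g (hP ▸ Subgroup.mem_top x : x ∈ commutator P)

theorem monoidHom_eq_one_of_ker_le {S P A : Type*} [Group S] [Group P] [CommGroup A]
    {f : S →* P} (hf : Function.Surjective f) (hP : commutator P = ⊤) (g : S →* A)
    (hfg : f.ker ≤ g.ker) : g = 1 := by
  have hlift := f.liftOfRightInverse_comp _ (Function.rightInverse_surjInv hf) ⟨g, hfg⟩
  rw [monoidHom_eq_one_of_commutator_eq_top hP (f.liftOfRightInverse _ _ ⟨g, hfg⟩)] at hlift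
  exact hlift.symm

theorem commutator_range_eq_top {P Q : Type*} [Group P] [Group Q] (hP : commutator P = ⊤)
    (f : P →* Q) : commutator f.range = ⊤ := by
  rw [← Subgroup.map_top_of_surjective _ f.rangeRestrict_surjective, ← hP, map_commutator_eq,
    MonoidHom.range_eq_top.mpr f.rangeRestrict_surjective, commutator_def]

variable {H P : Type*} [Group H] [Group P] {π : H →* P}

theorem eq_top_of_range_le_map [IsCoatomic (Subgroup H)] (hker : π.ker ≤ frattini H)
    {X : Subgroup H} (hX : π.range ≤ X.map π) : X = ⊤ := by
  refine frattini_nongenerating (top_le_iff.mp ?_)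
  calc ⊤ ≤ (X.map π).comap π := fun x _ ↦ hX ⟨x, rfl⟩
    _ ≤ X ⊔ frattini H := by
      rw [Subgroup.comap_map_eq]
      exact sup_le_sup_left hker X

theorem commutator_eq_top_of_ker_le_frattini [IsCoatomic (Subgroup H)]
    (hker : π.ker ≤ frattini H) (hP : commutator π.range = ⊤) : commutator H = ⊤ := by
  have hrange : ⁅π.range, π.range⁆ = π.range := by
    simpa [hP, ← MonoidHom.range_eq_map] using (map_commutator_eq _ π.range.subtype).symm
  exact eq_top_of_range_le_map hker (by rw [map_commutator_eq, hrange])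

theorem isSolvable_of_le_frattini [Finite H] {N : Subgroup H} (hN : N ≤ frattini H) :
    Group.IsSolvable N := by
  have := frattini_nilpotent (G := H)
  exact Group.isSolvable_of_isSolvable_injective (Subgroup.inclusion_injective hN)

theorem exists_subgroup_ker_le_frattini [Finite H] (hπ : Function.Surjective π) :
    ∃ L : Subgroup H,
      Function.Surjective (π.domRestrict L) ∧ (π.domRestrict L).ker ≤ frattini L := by
  obtain ⟨L, hL, hmin⟩ := exists_minimal_of_wellFoundedLT (fun L : Subgroup H ↦ L.map π = ⊤)
    ⟨⊤, Subgroup.map_top_of_surjective π hπ⟩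
  have hsurj : Function.Surjective (π.domRestrict L) := by
    rwa [← MonoidHom.range_eq_top, MonoidHom.domRestrict_range]
  refine ⟨L, hsurj, le_iInf₂ fun K (hK : IsCoatom K) ↦ by_contra fun hle ↦ hK.1 ?_⟩
  have hsup : K ⊔ (π.domRestrict L).ker = ⊤ := hK.2 _ (left_lt_sup.mpr hle)
  have hmap : (K.map L.subtype).map π = ⊤ := by
    rw [Subgroup.map_map, ← Subgroup.map_top_of_surjective _ hsurj]
    exact Subgroup.map_eq_map_iff.mpr (hsup.trans (top_sup_eq _).symm)
  have hle : L ≤ K.map L.subtype := hmin hmap (Subgroup.map_subtype_le K)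
  refine eq_top_iff.mpr fun x _ ↦ ?_
  obtain ⟨y, hy, hyx⟩ := hle x.2
  rwa [← Subtype.ext (a2 := x) hyx]

end Frattini

section Cocycles

variable {H β A : Type*} [Group H] [MulAction H β] [AddCommGroup A]

/-- A `1`-cocycle of `H` with values in the functions `β → A`, on which `H` acts from the right by
`(v · h) i = v (h • i)`. -/
def IsCocycle (c : H → β → A) : Prop :=
  ∀ g h i, c (g * h) i = c g (h • i) + c h i

namespace IsCocycle

variable {c : H → β → A}

theorem map_one (hc : IsCocycle c) (i : β) : c 1 i = 0 := by
  simpa using hc 1 1 i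

theorem map_inv_smul (hc : IsCocycle c) (h : H) (i : β) : c h⁻¹ (h • i) = -c h i := by
  rw [eq_neg_iff_add_eq_zero, ← hc, inv_mul_cancel, hc.map_one]

theorem map_mul_of_mem_ker (hc : IsCocycle c) (g : H) {m : H} (hm : m ∈ (toPermHom H β).ker)
    (i : β) : c (g * m) i = c g i + c m i := by
  rw [hc, show m • i = i from Perm.ext_iff.mp hm i]

theorem map_conj (hc : IsCocycle c) (h : H) {m : H} (hm : m ∈ (toPermHom H β).ker) (i : β) :
    c (h⁻¹ * m * h) i = c m (h • i) := by
  rw [hc, hc.map_mul_of_mem_ker _ hm, hc.map_inv_smul]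
  abel

theorem sub_prod (hc : IsCocycle c) : IsCocycle fun h (x : β × β) ↦ c h x.1 - c h x.2 :=
  fun g h x ↦ by
    simp only [hc g h, Prod.smul_fst, Prod.smul_snd]
    abel

/-- Evaluation of a cocycle at a point, a homomorphism on the stabilizer of that point. -/
def stabilizerHom (hc : IsCocycle c) (i : β) : stabilizer H i →* Multiplicative A :=
  MonoidHom.mk' (fun h ↦ .ofAdd (c h i)) fun g h ↦ by
    rw [Subgroup.coe_mul, hc, mem_stabilizer_iff.mp h.2, ofAdd_add]

theorem exists_eq_sub_of_stabilizerHom_eq_one (hc : IsCocycle c) {i₀ : β}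
    (h0 : hc.stabilizerHom i₀ = 1) :
    ∃ φ : β → A, ∀ h, ∀ i ∈ orbit H i₀, c h i = φ (h • i) - φ i := by
  have hstab : ∀ h, h • i₀ = i₀ → c h i₀ = 0 := fun h hh ↦
    DFunLike.congr_fun h0 (⟨h, hh⟩ : stabilizer H i₀)
  choose! t ht using fun i (hi : i ∈ orbit H i₀) ↦ mem_orbit_iff.mp hi
  refine ⟨fun i ↦ c (t i) i₀, fun h i hi ↦ ?_⟩
  let x := (t (h • i))⁻¹ * (h * t i)
  have hx : x • i₀ = i₀ := by
    rw [mul_smul, mul_smul, ht i hi, inv_smul_eq_iff, ht _ (mem_orbit_of_mem_orbit h hi)]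
  calc c h i = c (h * t i) i₀ - c (t i) i₀ := by rw [hc h, ht i hi, add_sub_cancel_right]
    _ = c (t (h • i) * x) i₀ - c (t i) i₀ := by rw [mul_inv_cancel_left]
    _ = c (t (h • i)) i₀ - c (t i) i₀ := by rw [hc, hx, hstab x hx, add_zero]

theorem exists_stabilizerHom_eq [IsPretransitive H β] {i₀ : β}
    (χ : stabilizer H i₀ →* Multiplicative A) :
    ∃ (c : H → β → A) (hc : IsCocycle c), hc.stabilizerHom i₀ = χ := by
  choose t ht using exists_smul_eq H i₀
  have hmem (h : H) (i : β) : (t (h • i))⁻¹ * h * t i ∈ stabilizer H i₀ := by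
    rw [mem_stabilizer_iff, mul_smul, mul_smul, ht, inv_smul_eq_iff, ht]
  refine ⟨fun h i ↦ (χ ⟨_, hmem h i⟩).toAdd, fun g h i ↦ ?_, MonoidHom.ext fun m ↦ ?_⟩
  · rw [← toAdd_mul, ← _root_.map_mul]
    refine congrArg (fun x ↦ (χ x).toAdd) (Subtype.ext ?_)
    simp [mul_smul, mul_assoc]
  · let t₀ : stabilizer H i₀ := ⟨t i₀, ht i₀⟩
    calc χ ⟨_, hmem m i₀⟩ = χ (t₀⁻¹ * m * t₀) :=
          congrArg χ (Subtype.ext (by simp [t₀, mem_stabilizer_iff.mp m.2]))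
      _ = χ m := by
        rw [_root_.map_mul, _root_.map_mul, map_inv, mul_comm, mul_inv_cancel_left]

end IsCocycle

end Cocycles

section Potential

theorem exists_three_ne_of_three_le_card {β : Type*} (hβ : 3 ≤ Nat.card β) :
    ∃ x y z : β, x ≠ y ∧ x ≠ z ∧ y ≠ z := by
  have := Nat.finite_of_card_ne_zero (show Nat.card β ≠ 0 by omega)
  rw [← Set.ncard_univ] at hβ
  simpa using (Set.two_lt_ncard_iff).mp hβ

theorem exists_eq_sub_of_pair_of_triple {β A : Type*} [AddCommGroup A] (hβ : 3 ≤ Nat.card β)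
    {φ : β → β → A} {T U : A} (hT : ∀ i j, i ≠ j → φ i j + φ j i = T)
    (hU : ∀ i j l, i ≠ j → j ≠ l → l ≠ i → φ i j + φ j l + φ l i = U) :
    ∃ b : β → A, ∀ i j, i ≠ j → φ i j + (T - U) = b i - b j := by
  classical
  obtain ⟨x, y, z, hxy, hxz, hyz⟩ := exists_three_ne_of_three_le_card hβ
  -- The two orientations of a triangle consist of three pairs `φ i j + φ j i`.
  have hTU : T + T + T = U + U := by
    linear_combination (norm := module) hU x y z hxy hyz hxz.symm + hU y x z hxy.symm hxz hyz.symm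
      - hT x y hxy - hT y z hyz - hT x z hxz
  have hskew (i j) (hij : i ≠ j) : φ j i + (T - U) = -(φ i j + (T - U)) := by
    linear_combination (norm := module) hT i j hij + hTU
  refine ⟨fun i ↦ if i = z then 0 else φ i z + (T - U), fun i j hij ↦ ?_⟩
  rcases eq_or_ne i z with rfl | hi
  · simp [hij.symm, hskew j i hij.symm]
  rcases eq_or_ne j z with rfl | hj
  · simp [hij]
  simp only [if_neg hi, if_neg hj]
  linear_combination (norm := module) hU i j z hij hj hi.symm - hskew i z hi + hTU

theorem exists_smul_eq_of_isMultiplyPretransitive_three {H β : Type*} [Group H] [MulAction H β]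
    [IsMultiplyPretransitive H β 3] {x y z i j l : β} (hxy : x ≠ y) (hyz : y ≠ z) (hzx : z ≠ x)
    (hij : i ≠ j) (hjl : j ≠ l) (hli : l ≠ i) : ∃ g : H, g • x = i ∧ g • y = j ∧ g • z = l := by
  let triple (u v w : β) (huv : u ≠ v) (hvw : v ≠ w) (hwu : w ≠ u) : Fin 3 ↪ β :=
    ⟨![u, v, w], fun a b hab ↦ by fin_cases a <;> fin_cases b <;> simp_all⟩
  obtain ⟨g, hg⟩ := exists_smul_eq H (triple x y z hxy hyz hzx) (triple i j l hij hjl hli)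
  exact ⟨g, DFunLike.congr_fun hg 0, DFunLike.congr_fun hg 1, DFunLike.congr_fun hg 2⟩

namespace IsCocycle

variable {H β A : Type*} [Group H] [MulAction H β] [AddCommGroup A] {c : H → β → A}

theorem exists_sub_eq_sub [IsMultiplyPretransitive H β 2] (hc : IsCocycle c)
    (h1 : ∀ i j, hc.sub_prod.stabilizerHom (i, j) = 1) :
    ∃ φ : β → β → A, ∀ h i j, i ≠ j → c h i - c h j = φ (h • i) (h • j) - φ i j := by
  rcases subsingleton_or_nontrivial β with _ | _
  · exact ⟨0, fun h i j hij ↦ absurd (Subsingleton.elim i j) hij⟩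
  obtain ⟨x, y, hxy⟩ := exists_pair_ne β
  obtain ⟨φ, hφ⟩ := hc.sub_prod.exists_eq_sub_of_stabilizerHom_eq_one (h1 x y)
  refine ⟨fun i j ↦ φ (i, j), fun h i j hij ↦ ?_⟩
  obtain ⟨g, rfl, rfl⟩ := is_two_pretransitive_iff.mp ‹IsMultiplyPretransitive H β 2› hxy hij
  exact hφ h _ ⟨g, rfl⟩

theorem exists_eq_add_sub [IsMultiplyPretransitive H β 3] (hβ : 3 ≤ Nat.card β) (hc : IsCocycle c)
    (h1 : ∀ i j, hc.sub_prod.stabilizerHom (i, j) = 1) :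
    ∃ (χ : H →* Multiplicative A) (b : β → A), ∀ h i, c h i = (χ h).toAdd + (b (h • i) - b i) := by
  have := Nat.finite_of_card_ne_zero (show Nat.card β ≠ 0 by omega)
  have : IsMultiplyPretransitive H β 2 := isMultiplyPretransitive_of_le (by omega) hβ
  obtain ⟨φ, hφ⟩ := hc.exists_sub_eq_sub h1
  obtain ⟨x, y, z, hxy, hxz, hyz⟩ := exists_three_ne_of_three_le_card hβ
  have hT (i j) (hij : i ≠ j) : φ i j + φ j i = φ x y + φ y x := by
    obtain ⟨g, rfl, rfl⟩ := is_two_pretransitive_iff.mp ‹IsMultiplyPretransitive H β 2› hxy hij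
    linear_combination (norm := module) -hφ g x y hxy - hφ g y x hxy.symm
  have hU (i j l) (hij : i ≠ j) (hjl : j ≠ l) (hli : l ≠ i) :
      φ i j + φ j l + φ l i = φ x y + φ y z + φ z x := by
    obtain ⟨g, rfl, rfl, rfl⟩ :=
      exists_smul_eq_of_isMultiplyPretransitive_three (H := H) hxy hyz hxz.symm hij hjl hli
    linear_combination (norm := module) -hφ g x y hxy - hφ g y z hyz - hφ g z x hxz.symm
  obtain ⟨b, hb⟩ := exists_eq_sub_of_pair_of_triple hβ hT hU
  have hconst (h i j) : c h i - (b (h • i) - b i) = c h j - (b (h • j) - b j) := by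
    rcases eq_or_ne i j with rfl | hij
    · rfl
    linear_combination (norm := module)
      hφ h i j hij + hb _ _ ((MulAction.injective h).ne hij) - hb i j hij
  refine ⟨MonoidHom.mk' (fun h ↦ .ofAdd (c h x - (b (h • x) - b x))) fun g h ↦ ?_, b, fun h i ↦ ?_⟩
  · rw [← ofAdd_add, hconst g x (h • x), hc, mul_smul]
    congr 1
    abel
  · simp [hconst h x i]

end IsCocycle

end Potential

section PermutationModule

variable {α K : Type*} [Fintype α] [DecidableEq α] [DivisionRing K] {W : Submodule K (α → K)}

theorem single_sub_single_mem_of_apply_ne_zero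
    (hW : ∀ σ ∈ alternatingGroup α, ∀ v ∈ W, v ∘ σ ∈ W) {v : α → K} (hv : v ∈ W) {i s t : α}
    (his : i ≠ s) (hit : i ≠ t) (hst : s ≠ t) (hi : v i ≠ 0) (hs : v s = 0) (ht : v t = 0) :
    (Pi.single i 1 - Pi.single s 1 : α → K) ∈ W := by
  have hσ : swap i s * swap i t ∈ alternatingGroup α :=
    (Perm.isThreeCycle_swap_mul_swap_same his hit hst).mem_alternatingGroup
  -- `v - v ∘ (swap i s * swap i t)` is `v i • (e_i - e_s)`.
  have hmem := W.smul_mem (v i)⁻¹ (W.sub_mem hv (hW _ hσ v hv))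
  convert hmem using 1
  ext x
  rcases eq_or_ne x i with rfl | hxi
  · simp [swap_apply_of_ne_of_ne hit.symm hst.symm, ht, his, hi]
  rcases eq_or_ne x s with rfl | hxs
  · simp [swap_apply_of_ne_of_ne his.symm hst, hs, his.symm, hi]
  rcases eq_or_ne x t with rfl | hxt
  · simp [hs, ht, hxi, hxs]
  · simp [swap_apply_of_ne_of_ne, hxi, hxs, hxt]

theorem exists_single_sub_single_mem (hα : 5 ≤ Nat.card α)
    (hW : ∀ σ ∈ alternatingGroup α, ∀ v ∈ W, v ∘ σ ∈ W) {v : α → K} (hv : v ∈ W) {i j : α}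
    (hij : v i ≠ v j) : ∃ s, i ≠ s ∧ (Pi.single i 1 - Pi.single s 1 : α → K) ∈ W := by
  have hcard : 2 < ({i, j}ᶜ : Finset α).card := by
    have := Finset.card_le_two (a := i) (b := j)
    rw [Finset.card_compl, ← Nat.card_eq_fintype_card]
    omega
  obtain ⟨r, hr, s, hs, t, ht, hrs, hrt, hst⟩ := Finset.two_lt_card.mp hcard
  simp only [Finset.mem_compl, Finset.mem_insert, Finset.mem_singleton, not_or] at hr hs ht
  have hne : i ≠ j := ne_of_apply_ne v hij
  have hσ : swap i r * swap i j ∈ alternatingGroup α :=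
    (Perm.isThreeCycle_swap_mul_swap_same (Ne.symm hr.1) hne hr.2).mem_alternatingGroup
  refine ⟨s, Ne.symm hs.1, single_sub_single_mem_of_apply_ne_zero hW
    (W.sub_mem hv (hW _ hσ v hv)) (Ne.symm hs.1) (Ne.symm ht.1) hst ?_ ?_ ?_⟩
  · simpa [swap_apply_of_ne_of_ne hne.symm (Ne.symm hr.2), sub_eq_zero] using hij
  · simp [swap_apply_of_ne_of_ne hs.1 hs.2, swap_apply_of_ne_of_ne hs.1 hrs.symm]
  · simp [swap_apply_of_ne_of_ne ht.1 ht.2, swap_apply_of_ne_of_ne ht.1 hrt.symm]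

theorem mem_of_sum_eq_zero (hα : 5 ≤ Nat.card α)
    (hW : ∀ σ ∈ alternatingGroup α, ∀ v ∈ W, v ∘ σ ∈ W) {v : α → K} (hv : v ∈ W) {i j : α}
    (hij : v i ≠ v j) {w : α → K} (hw : ∑ x, w x = 0) : w ∈ W := by
  obtain ⟨s, his, hmem⟩ := exists_single_sub_single_mem hα hW hv hij
  have := alternatingGroup.isMultiplyPretransitive α
  have h2 : IsMultiplyPretransitive (alternatingGroup α) α 2 :=
    isMultiplyPretransitive_of_le (n := Nat.card α - 2) (by omega) (by omega)
  have hdiff (x : α) : (Pi.single x 1 - Pi.single i 1 : α → K) ∈ W := by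
    rcases eq_or_ne x i with rfl | hxi
    · simp
    obtain ⟨σ, rfl, hσ⟩ := is_two_pretransitive_iff.mp h2 his hxi
    convert hW _ (inv_mem σ.2) _ hmem using 1
    ext y
    simp only [← hσ, Pi.single_apply, Pi.sub_apply, Function.comp_apply, Perm.inv_eq_iff_eq,
      Subgroup.smul_def, Perm.smul_def]
  have hsum : w = ∑ x, w x • (Pi.single x 1 - Pi.single i 1) := by
    simp_rw [smul_sub]
    rw [Finset.sum_sub_distrib, ← Finset.sum_smul, hw, zero_smul, sub_zero, ← pi_eq_sum_univ']
  rw [hsum]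
  exact W.sum_mem fun x _ ↦ W.smul_mem _ (hdiff x)

end PermutationModule

namespace IsCocycle

variable {H β A : Type*} [Group H] [MulAction H β] [AddCommGroup A] {c : H → β → A}

/-- The functions `β → A` that a cocycle takes as values on the kernel of the action. -/
def kerValues (hc : IsCocycle c) : AddSubgroup (β → A) where
  carrier := c '' (toPermHom H β).ker
  add_mem' := by
    rintro _ _ ⟨g, hg, rfl⟩ ⟨m, hm, rfl⟩
    exact ⟨g * m, mul_mem hg hm, funext (hc.map_mul_of_mem_ker g hm)⟩
  zero_mem' := ⟨1, one_mem _, funext hc.map_one⟩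
  neg_mem' := by
    rintro _ ⟨m, hm, rfl⟩
    refine ⟨m⁻¹, inv_mem hm, funext fun i ↦ ?_⟩
    simpa [show m • i = i from Perm.ext_iff.mp hm i] using hc.map_inv_smul m i

theorem comp_mem_kerValues (hc : IsCocycle c) (h : H) {v : β → A} (hv : v ∈ hc.kerValues) :
    v ∘ toPermHom H β h ∈ hc.kerValues := by
  obtain ⟨m, hm, rfl⟩ := hv
  exact ⟨h⁻¹ * m * h, by simpa using (inferInstance : (toPermHom H β).ker.Normal).conj_mem m hm h⁻¹,
    funext (hc.map_conj h hm)⟩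

theorem sum_eq_zero [Fintype β] (hc : IsCocycle c) (hH : commutator H = ⊤) (h : H) :
    ∑ i, c h i = 0 := by
  let total : H →* Multiplicative A := MonoidHom.mk' (fun h ↦ .ofAdd (∑ i, c h i)) fun g h ↦ by
    have hperm : ∑ i, c g (h • i) = ∑ i, c g i := Equiv.sum_comp (toPerm h) (c g)
    simp only [hc g h, Finset.sum_add_distrib, hperm, ofAdd_add]
  exact DFunLike.congr_fun (monoidHom_eq_one_of_commutator_eq_top hH total) h

theorem eq_zero_of_forall_mem_kerValues [IsCoatomic (Subgroup H)] (hc : IsCocycle c)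
    (hker : (toPermHom H β).ker ≤ frattini H) (hmem : ∀ h, c h ∈ hc.kerValues) : c = 0 := by
  -- The zeros of `c` form a subgroup, and `hmem` makes it meet every coset of the kernel.
  let X : Subgroup H :=
    { carrier := {h | c h = 0}
      one_mem' := funext hc.map_one
      mul_mem' := fun {g h} hg hh ↦ by
        ext i
        simp [hc g h, show c g = 0 from hg, show c h = 0 from hh]
      inv_mem' := fun {h} hh ↦ by
        ext i
        simpa [show c h = 0 from hh] using hc.map_inv_smul h (h⁻¹ • i) }
  have hX : X = ⊤ := by
    refine eq_top_of_range_le_map hker ?_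
    rintro _ ⟨h, rfl⟩
    obtain ⟨m, hm, hmh⟩ := neg_mem (hmem h)
    refine ⟨h * m, funext fun i ↦ ?_, by rw [_root_.map_mul, hm, mul_one]⟩
    rw [hc.map_mul_of_mem_ker h hm, hmh, Pi.neg_apply, add_neg_cancel, Pi.zero_apply]
  funext h
  exact (hX ▸ Subgroup.mem_top h : h ∈ X)

end IsCocycle

section FrattiniCover

variable {H α : Type*} [Group H] [Fintype α] [DecidableEq α] [MulAction H α]

theorem isMultiplyPretransitive_of_range_eq (hrange : (toPermHom H α).range = alternatingGroup α)
    {n : ℕ} (hn : n + 2 ≤ Nat.card α) : IsMultiplyPretransitive H α n := by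
  have := alternatingGroup.isMultiplyPretransitive α
  have : IsMultiplyPretransitive (alternatingGroup α) α n :=
    isMultiplyPretransitive_of_le (n := Nat.card α - 2) (by omega) (by omega)
  refine isMultiplyPretransitive_iff.mpr fun x y ↦ ?_
  obtain ⟨⟨σ, hσ⟩, hxy⟩ := exists_smul_eq (alternatingGroup α) x y
  obtain ⟨h, rfl⟩ := hrange.ge hσ
  exact ⟨h, hxy⟩

theorem range_domRestrict_fixingSubgroup
    (hrange : (toPermHom H α).range = alternatingGroup α) (s : Finset α) :
    ((toPermHom H α).domRestrict (fixingSubgroup H (s : Set α))).range =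
      ((alternatingGroup α).subtype.comp (alternatingGroup.ofSubtype sᶜ)).range := by
  have hsupp (σ : Perm α) : σ.support ⊆ sᶜ ↔ ∀ i ∈ s, σ i = i := by
    rw [Finset.subset_compl_comm]
    simp [Finset.subset_iff]
  ext σ
  rw [MonoidHom.range_comp, Subgroup.mem_map]
  simp only [alternatingGroup.mem_range_ofSubtype_iff, hsupp]
  constructor
  · rintro ⟨⟨h, hh⟩, rfl⟩
    exact ⟨⟨_, hrange.le ⟨h, rfl⟩⟩, (mem_fixingSubgroup_iff H).mp hh, rfl⟩
  · rintro ⟨⟨σ, hσ⟩, hs, rfl⟩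
    obtain ⟨h, rfl⟩ := hrange.ge hσ
    exact ⟨⟨h, (mem_fixingSubgroup_iff H).mpr hs⟩, rfl⟩

theorem commutator_range_domRestrict_stabilizer_pair (hα : 7 ≤ Nat.card α)
    (hrange : (toPermHom H α).range = alternatingGroup α) (i j : α) :
    commutator ((toPermHom H α).domRestrict (stabilizer H (i, j))).range = ⊤ := by
  have hstab : stabilizer H (i, j) = fixingSubgroup H (({i, j} : Finset α) : Set α) := by
    ext h
    simp [mem_fixingSubgroup_iff]
  rw [hstab, range_domRestrict_fixingSubgroup hrange]
  refine commutator_range_eq_top (commutator_alternatingGroup_eq_top ?_) _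
  have := Finset.card_le_two (a := i) (b := j)
  rw [Nat.card_eq_fintype_card, Fintype.card_coe, Finset.card_compl, ← Nat.card_eq_fintype_card]
  omega

theorem nonempty_range_domRestrict_stabilizer_mulEquiv
    (hrange : (toPermHom H α).range = alternatingGroup α) (i : α) :
    Nonempty (((toPermHom H α).domRestrict (stabilizer H i)).range ≃*
      alternatingGroup ({i}ᶜ : Finset α)) := by
  have hstab : stabilizer H i = fixingSubgroup H (({i} : Finset α) : Set α) := by
    ext h
    simp [mem_fixingSubgroup_iff]
  rw [hstab, range_domRestrict_fixingSubgroup hrange]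
  have hinj : Function.Injective ((alternatingGroup α).subtype.comp
      (alternatingGroup.ofSubtype ({i}ᶜ : Finset α))) :=
    (alternatingGroup α).subtype_injective.comp alternatingGroup.ofSubtype_injective
  exact ⟨(MonoidHom.ofInjective hinj).symm⟩

theorem isPretransitive_of_range_eq (hα : 3 ≤ Nat.card α)
    (hrange : (toPermHom H α).range = alternatingGroup α) : IsPretransitive H α := by
  have := isMultiplyPretransitive_of_range_eq hrange (n := 1) hα
  exact is_one_pretransitive_iff.mp this

theorem commutator_eq_top_of_range_eq_alternatingGroup [IsCoatomic (Subgroup H)]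
    (hα : 5 ≤ Nat.card α) (hrange : (toPermHom H α).range = alternatingGroup α)
    (hker : (toPermHom H α).ker ≤ frattini H) : commutator H = ⊤ := by
  refine commutator_eq_top_of_ker_le_frattini hker ?_
  rw [hrange]
  exact commutator_alternatingGroup_eq_top hα

namespace IsCocycle

section

variable {A : Type*} [AddCommGroup A] {c : H → α → A}

theorem stabilizerHom_sub_prod_eq_one (hα : 7 ≤ Nat.card α)
    (hrange : (toPermHom H α).range = alternatingGroup α) (hc : IsCocycle c)
    (hconst : ∀ m ∈ (toPermHom H α).ker, ∀ i j, c m i = c m j) (i j : α) :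
    hc.sub_prod.stabilizerHom (i, j) = 1 := by
  refine monoidHom_eq_one_of_ker_le (MonoidHom.rangeRestrict_surjective _)
    (commutator_range_domRestrict_stabilizer_pair hα hrange i j) _ fun m hm ↦ ?_
  rw [MonoidHom.ker_rangeRestrict] at hm
  exact congrArg Multiplicative.ofAdd (sub_eq_zero.mpr (hconst m hm i j))

end

variable {p : ℕ} [Fact p.Prime] {c : H → α → ZMod p}

theorem apply_eq_apply_of_mem_ker [IsCoatomic (Subgroup H)] (hα : 5 ≤ Nat.card α)
    (hrange : (toPermHom H α).range = alternatingGroup α)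
    (hker : (toPermHom H α).ker ≤ frattini H) (hc : IsCocycle c) {m : H}
    (hm : m ∈ (toPermHom H α).ker) (i j : α) : c m i = c m j := by
  by_contra hij
  have hH := commutator_eq_top_of_range_eq_alternatingGroup hα hrange hker
  have hinv : ∀ σ ∈ alternatingGroup α, ∀ v ∈ AddSubgroup.toZModSubmodule p hc.kerValues,
      v ∘ σ ∈ AddSubgroup.toZModSubmodule p hc.kerValues := by
    intro σ hσ v hv
    obtain ⟨h, rfl⟩ := hrange.ge hσ
    exact hc.comp_mem_kerValues h hv
  have hzero : c = 0 := hc.eq_zero_of_forall_mem_kerValues hker fun h ↦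
    mem_of_sum_eq_zero hα hinv (show c m ∈ _ from ⟨m, hm, rfl⟩) hij (hc.sum_eq_zero hH h)
  simp [hzero] at hij

theorem apply_eq_zero_of_mem_ker [IsCoatomic (Subgroup H)] (hα : 7 ≤ Nat.card α)
    (hrange : (toPermHom H α).range = alternatingGroup α)
    (hker : (toPermHom H α).ker ≤ frattini H) (hc : IsCocycle c) {m : H}
    (hm : m ∈ (toPermHom H α).ker) (i : α) : c m i = 0 := by
  have := isMultiplyPretransitive_of_range_eq hrange (n := 3) (by omega)
  obtain ⟨χ, b, hχ⟩ := hc.exists_eq_add_sub (by omega) <|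
    hc.stabilizerHom_sub_prod_eq_one hα hrange fun _ ↦
      hc.apply_eq_apply_of_mem_ker (by omega) hrange hker
  have hH := commutator_eq_top_of_range_eq_alternatingGroup (by omega) hrange hker
  rw [hχ, monoidHom_eq_one_of_commutator_eq_top hH χ, show m • i = i from Perm.ext_iff.mp hm i]
  simp

end IsCocycle

theorem stabilizer_monoidHom_apply_eq_one_of_mem_ker [IsCoatomic (Subgroup H)]
    (hα : 7 ≤ Nat.card α) (hrange : (toPermHom H α).range = alternatingGroup α)
    (hker : (toPermHom H α).ker ≤ frattini H) {p : ℕ} [Fact p.Prime] {i : α}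
    (χ : stabilizer H i →* Multiplicative (ZMod p)) {m : stabilizer H i}
    (hm : (m : H) ∈ (toPermHom H α).ker) : χ m = 1 := by
  have := isPretransitive_of_range_eq (by omega) hrange
  obtain ⟨c, hc, rfl⟩ := IsCocycle.exists_stabilizerHom_eq χ
  exact hc.apply_eq_zero_of_mem_ker hα hrange hker hm i

end FrattiniCover

section SolvableQuotient

open scoped Nat

theorem isSimpleGroup_quotient_of_isCoatom {G : Type*} [Group G] {K : Subgroup G} [K.Normal]
    (hK : IsCoatom K) : IsSimpleGroup (G ⧸ K) where
  exists_pair_ne := by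
    have := QuotientGroup.nontrivial_iff.mpr hK.1
    exact exists_pair_ne _
  eq_bot_or_eq_top_of_normal L _ := by
    have hmap := Subgroup.map_comap_eq_self_of_surjective (QuotientGroup.mk'_surjective K) L
    rcases hK.le_iff.mp (QuotientGroup.le_comap_mk' K L) with h | h
    · exact .inr <| by
        rw [← hmap, h, Subgroup.map_top_of_surjective _ (QuotientGroup.mk'_surjective K)]
    · exact .inl <| by rw [← hmap, h, QuotientGroup.map_mk'_self]

theorem exists_monoidHom_zmod_ne_one (Q : Type*) [Group Q] [Finite Q] [Nontrivial Q]
    [Group.IsSolvable Q] :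
    ∃ p, ∃ _ : Fact p.Prime, ∃ χ : Q →* Multiplicative (ZMod p), χ ≠ 1 := by
  have : Nontrivial (Abelianization Q) :=
    QuotientGroup.nontrivial_iff.mpr (Group.IsSolvable.commutator_lt_top_of_nontrivial Q).ne
  obtain ⟨K, hK, -⟩ := (eq_top_or_exists_le_coatom (⊥ : Subgroup (Abelianization Q))).resolve_left
    bot_ne_top
  have := isSimpleGroup_quotient_of_isCoatom hK
  let e := zmodCyclicMulEquiv (inferInstance : IsCyclic (Abelianization Q ⧸ K))
  let χ := e.symm.toMonoidHom.comp ((QuotientGroup.mk' K).comp Abelianization.of)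
  have hχ : Function.Surjective χ := e.symm.surjective.comp
    ((QuotientGroup.mk'_surjective K).comp (QuotientGroup.mk'_surjective _))
  refine ⟨_, ⟨IsSimpleGroup.prime_card⟩, χ, fun h1 ↦ ?_⟩
  have := e.symm.injective.nontrivial
  obtain ⟨x, hx⟩ := exists_ne (1 : Multiplicative (ZMod (Nat.card (Abelianization Q ⧸ K))))
  obtain ⟨q, rfl⟩ := hχ x
  exact hx (DFunLike.congr_fun h1 q)

theorem index_normalCore_dvd_factorial {G : Type*} [Group G] (X : Subgroup G) [X.FiniteIndex] :
    X.normalCore.index ∣ X.index ! := by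
  rw [Subgroup.normalCore_eq_ker, Subgroup.index_ker, Subgroup.index_eq_card, ← Nat.card_perm]
  exact Subgroup.card_subgroup_dvd_card _

variable {Y S : Type*} [Group Y] [Group S] [IsSimpleGroup S] {ρ : Y →* S}
  {X : Subgroup Y} [X.FiniteIndex]

theorem normalCore_map_eq_top (hρ : Function.Surjective ρ) (hX : X.index ! < Nat.card S) :
    X.normalCore.map ρ = ⊤ := by
  refine ((X.normalCore_normal.map ρ hρ).eq_bot_or_eq_top).resolve_left fun hbot ↦ hX.not_ge ?_
  calc Nat.card S = ρ.ker.index := by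
        rw [Subgroup.index_ker, MonoidHom.range_eq_top.mpr hρ, Subgroup.card_top]
    _ ≤ X.index ! := Nat.le_of_dvd (Nat.factorial_pos _) <|
        (Subgroup.index_dvd_of_le ((Subgroup.map_eq_bot_iff _).mp hbot)).trans
          (index_normalCore_dvd_factorial X)

theorem exists_monoidHom_zmod_ker_not_le (hρ : Function.Surjective ρ) [Group.IsSolvable ρ.ker]
    (hX : X.index ! < Nat.card S) (hker : ¬ ρ.ker ≤ X) :
    ∃ p, ∃ _ : Fact p.Prime, ∃ χ : Y →* Multiplicative (ZMod p), ¬ ρ.ker ≤ χ.ker := by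
  let q : ρ.ker →* Y ⧸ X.normalCore := (QuotientGroup.mk' X.normalCore).domRestrict ρ.ker
  have hq : Function.Surjective q := by
    have htop : ρ.ker ⊔ X.normalCore = ⊤ := by
      rw [sup_comm, ← Subgroup.comap_map_eq, normalCore_map_eq_top hρ hX, Subgroup.comap_top]
    rw [← MonoidHom.range_eq_top, MonoidHom.domRestrict_range,
      ← Subgroup.map_top_of_surjective _ (QuotientGroup.mk'_surjective X.normalCore), ← htop]
    exact Subgroup.map_eq_map_iff.mpr (by simp)
  have : Group.IsSolvable (Y ⧸ X.normalCore) := Group.isSolvable_of_surjective hq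
  have : Nontrivial (Y ⧸ X.normalCore) := QuotientGroup.nontrivial_iff.mpr fun htop ↦
    hker (le_top.trans (htop.ge.trans X.normalCore_le))
  obtain ⟨p, hp, χ, hχ⟩ := exists_monoidHom_zmod_ne_one (Y ⧸ X.normalCore)
  refine ⟨p, hp, χ.comp (QuotientGroup.mk' _), fun hle ↦ hχ (MonoidHom.ext fun y ↦ ?_)⟩
  obtain ⟨m, rfl⟩ := hq y
  exact hle m.2

end SolvableQuotient

section MinimalCover

open scoped Nat

theorem two_mul_index_sup_le {H : Type*} [Group H] {X K : Subgroup H} [X.FiniteIndex]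
    (hKX : ¬ K ≤ X) : 2 * (X ⊔ K).index ≤ X.index := by
  rw [← Subgroup.relIndex_mul_index (le_sup_left : X ≤ X ⊔ K)]
  refine Nat.mul_le_mul_right _ ((Nat.two_le_iff _).mpr ⟨fun h0 ↦ ?_, fun h1 ↦ ?_⟩)
  · refine X.index_ne_zero_of_finite ?_
    rw [← Subgroup.relIndex_mul_index (le_sup_left : X ≤ X ⊔ K), h0, zero_mul]
  · exact hKX (le_sup_right.trans (Subgroup.relIndex_eq_one.mp h1))

theorem factorial_lt_card_alternatingGroup {β : Type*} [Fintype β] [DecidableEq β]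
    (hβ : 3 ≤ Nat.card β) {r : ℕ} (hr : r < Nat.card β) : r ! < Nat.card (alternatingGroup β) := by
  have : Nontrivial β := Finite.one_lt_card_iff_nontrivial.mp (by omega)
  suffices 2 * r ! < 2 * Nat.card (alternatingGroup β) by omega
  calc 2 * r ! ≤ 2 * (Nat.card β - 1)! := by gcongr; omega
    _ < Nat.card β * (Nat.card β - 1)! := Nat.mul_lt_mul_of_pos_right hβ (Nat.factorial_pos _)
    _ = 2 * Nat.card (alternatingGroup β) := by
      rw [Nat.mul_factorial_pred (by omega), two_mul_nat_card_alternatingGroup, Nat.card_perm]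

variable {H α : Type*} [Group H] [Fintype α] [DecidableEq α] [MulAction H α]

theorem card_pred_le_relIndex_stabilizer [Finite H] (hα : 7 ≤ Nat.card α)
    (hrange : (toPermHom H α).range = alternatingGroup α)
    (hker : (toPermHom H α).ker ≤ frattini H) {X : Subgroup H}
    (hX : ¬ (toPermHom H α).ker ≤ X) (i : α) :
    Nat.card α - 1 ≤ X.relIndex (stabilizer H i) := by
  let ρ := ((toPermHom H α).domRestrict (stabilizer H i)).rangeRestrict
  have hρker : ρ.ker = (toPermHom H α).ker.subgroupOf (stabilizer H i) := by
    rw [MonoidHom.ker_rangeRestrict, MonoidHom.ker_domRestrict]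
  have hle : (toPermHom H α).ker ≤ stabilizer H i := fun m hm ↦ Perm.ext_iff.mp hm i
  have hsolv : Group.IsSolvable ρ.ker := by
    have := isSolvable_of_le_frattini hker
    rw [hρker]
    let e := Subgroup.subgroupOfEquivOfLe hle
    exact Group.isSolvable_of_isSolvable_injective (f := e.toMonoidHom) e.injective
  obtain ⟨e⟩ := nonempty_range_domRestrict_stabilizer_mulEquiv hrange i
  have hcard : Nat.card ({i}ᶜ : Finset α) = Nat.card α - 1 := by
    rw [Nat.card_eq_fintype_card, Fintype.card_coe, Finset.card_compl, Finset.card_singleton,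
      Nat.card_eq_fintype_card]
  have : IsSimpleGroup (alternatingGroup ({i}ᶜ : Finset α)) :=
    alternatingGroup.isSimpleGroup (by omega)
  have := e.isSimpleGroup
  by_contra! hlt
  have hfact : (X.subgroupOf (stabilizer H i)).index ! <
      Nat.card ((toPermHom H α).domRestrict (stabilizer H i)).range := by
    rw [Nat.card_congr e.toEquiv]
    exact factorial_lt_card_alternatingGroup (by omega) (hlt.trans_eq hcard.symm)
  obtain ⟨p, _, χ, hχ⟩ := exists_monoidHom_zmod_ker_not_le
    (MonoidHom.rangeRestrict_surjective _ : Function.Surjective ρ) hfact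
    fun h ↦ hX fun m hm ↦ h (show (⟨m, hle hm⟩ : stabilizer H i) ∈ ρ.ker by rwa [hρker])
  refine hχ fun m hm ↦ stabilizer_monoidHom_apply_eq_one_of_mem_ker hα hrange hker χ ?_
  rwa [hρker] at hm

theorem card_mul_pred_le_index_of_le_stabilizer [Finite H] (hα : 7 ≤ Nat.card α)
    (hrange : (toPermHom H α).range = alternatingGroup α)
    (hker : (toPermHom H α).ker ≤ frattini H) {X : Subgroup H}
    (hX : ¬ (toPermHom H α).ker ≤ X) {i : α} (hi : X ≤ stabilizer H i) :
    Nat.card α * (Nat.card α - 1) ≤ X.index := by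
  have := isPretransitive_of_range_eq (by omega) hrange
  rw [← Subgroup.relIndex_mul_index hi, index_stabilizer_of_transitive, mul_comm]
  exact Nat.mul_le_mul_right _ (card_pred_le_relIndex_stabilizer hα hrange hker hX i)

theorem exists_le_stabilizer_of_index_sup_lt [IsCoatomic (Subgroup H)] (hα : 9 ≤ Nat.card α)
    (hrange : (toPermHom H α).range = alternatingGroup α)
    (hker : (toPermHom H α).ker ≤ frattini H) {X : Subgroup H} (htop : X ≠ ⊤)
    (hX : (X ⊔ (toPermHom H α).ker).index < (Nat.card α).choose 2) :
    ∃ i : α, X ≤ stabilizer H i := by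
  let G := (X.map (toPermHom H α)).subgroupOf (alternatingGroup α)
  have hindex : G.index = (X ⊔ (toPermHom H α).ker).index := by
    rw [← Subgroup.comap_map_eq, Subgroup.index_comap, hrange]
    rfl
  have hG : G ≠ ⊤ := fun h ↦ htop <| eq_top_of_range_le_map hker <| by
    rw [hrange]
    exact Subgroup.subgroupOf_eq_top.mp h
  obtain ⟨i, hi⟩ := exists_fixed_point_of_index_lt_choose_two hα (hindex ▸ hX) hG
  exact ⟨i, fun x hx ↦ hi ⟨toPermHom H α x, hrange.le ⟨x, rfl⟩⟩ (Subgroup.mem_map_of_mem _ hx)⟩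

theorem card_mul_pred_le_index_of_ker_le_frattini [Finite H] (hα : 9 ≤ Nat.card α)
    (hrange : (toPermHom H α).range = alternatingGroup α)
    (hker : (toPermHom H α).ker ≤ frattini H) {X : Subgroup H}
    (hX : ¬ (toPermHom H α).ker ≤ X) : Nat.card α * (Nat.card α - 1) ≤ X.index := by
  by_contra! hlt
  have htop : X ≠ ⊤ := fun h ↦ hX (h ▸ le_top)
  have hsup : (X ⊔ (toPermHom H α).ker).index < (Nat.card α).choose 2 := by
    have := two_mul_index_sup_le hX
    rw [Nat.choose_two_right]
    have := (Nat.even_mul_pred_self (Nat.card α)).two_dvd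
    omega
  obtain ⟨i, hi⟩ := exists_le_stabilizer_of_index_sup_lt hα hrange hker htop hsup
  exact hlt.not_ge (card_mul_pred_le_index_of_le_stabilizer (by omega) hrange hker hX hi)

end MinimalCover

section Complement

theorem isComplement'_ker_of_bijective_domRestrict {H G : Type*} [Group H] [Group G] {π : H →* G}
    {L : Subgroup H} (hL : Function.Bijective (π.domRestrict L)) : π.ker.IsComplement' L := by
  refine Subgroup.isComplement'_of_disjoint_and_mul_eq_univ ?_ (Set.eq_univ_of_forall fun x ↦ ?_)
  · rw [Subgroup.disjoint_def]
    intro x hx hxL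
    exact congrArg Subtype.val (hL.injective (show π.domRestrict L ⟨x, hxL⟩ = π.domRestrict L 1 by
      rw [map_one]; exact hx))
  · obtain ⟨l, hl⟩ := hL.surjective (π x)
    have hl : π (l : H) = π x := hl
    refine Set.mem_mul.mpr ⟨x * (l : H)⁻¹, ?_, l, l.2, inv_mul_cancel_right _ _⟩
    rw [SetLike.mem_coe, MonoidHom.mem_ker, map_mul, map_inv, hl, mul_inv_cancel]

theorem exists_index_le_card_not_le {H Ω : Type*} [Group H] [Finite Ω] {f : H →* Perm Ω}
    (hf : Function.Injective f) {K : Subgroup H} (hK : K ≠ ⊥) :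
    ∃ X : Subgroup H, X.index ≤ Nat.card Ω ∧ ¬ K ≤ X := by
  let _ := MulAction.compHom Ω f
  by_contra! h
  refine hK ((Subgroup.eq_bot_iff_forall K).mpr fun x hx ↦ hf (Perm.ext fun ω ↦ ?_))
  rw [map_one]
  refine h (stabilizer H ω) ?_ hx
  rw [index_stabilizer]
  exact Set.ncard_le_card _

end Complement

section MainTheorem

variable {α Ω H : Type*} [Fintype α] [DecidableEq α] [Finite Ω] [Group H]

theorem card_mul_pred_le_of_ker_le_frattini (hα : 9 ≤ Nat.card α) {π : H →* alternatingGroup α}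
    (hπ : Function.Surjective π) (hfrattini : π.ker ≤ frattini H) (hker : π.ker ≠ ⊥)
    {f : H →* Perm Ω} (hf : Function.Injective f) :
    Nat.card α * (Nat.card α - 1) ≤ Nat.card Ω := by
  have : Finite H := Finite.of_injective f hf
  let _ : MulAction H α := MulAction.compHom α π
  have hperm : toPermHom H α = (alternatingGroup α).subtype.comp π :=
    MonoidHom.ext fun _ ↦ Perm.ext fun _ ↦ rfl
  have hpermker : (toPermHom H α).ker = π.ker := by
    rw [hperm, MonoidHom.ker_comp_of_injective _ _ (Subgroup.subtype_injective _)]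
  have hrange : (toPermHom H α).range = alternatingGroup α := by
    rw [hperm, MonoidHom.range_comp, MonoidHom.range_eq_top.mpr hπ, ← MonoidHom.range_eq_map,
      Subgroup.range_subtype]
  obtain ⟨X, hXΩ, hX⟩ := exists_index_le_card_not_le hf hker
  refine (card_mul_pred_le_index_of_ker_le_frattini hα hrange ?_ ?_).trans hXΩ
  · rwa [hpermker]
  · rwa [hpermker]

theorem nonsplit_extension_min_degree_general (hα : 9 ≤ Nat.card α) (M : Subgroup H) [M.Normal]
    (iso : H ⧸ M ≃* alternatingGroup α) (nonsplit : ¬ ∃ K : Subgroup H, M.IsComplement' K)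
    (f : H →* Perm Ω) (hf : Function.Injective f) :
    Nat.card α * (Nat.card α - 1) ≤ Nat.card Ω := by
  have : Finite H := Finite.of_injective f hf
  let π : H →* alternatingGroup α := iso.toMonoidHom.comp (QuotientGroup.mk' M)
  have hπ : Function.Surjective π := iso.surjective.comp (QuotientGroup.mk'_surjective M)
  have hker : π.ker = M :=
    (MonoidHom.ker_mulEquiv_comp _ iso).trans (QuotientGroup.ker_mk' M)
  obtain ⟨L, hL, hfrattini⟩ := exists_subgroup_ker_le_frattini hπ
  refine card_mul_pred_le_of_ker_le_frattini hα hL hfrattini (fun hbot ↦ nonsplit ⟨L, ?_⟩)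
    (f := f.domRestrict L) (hf.comp L.subtype_injective)
  exact hker ▸ isComplement'_ker_of_bijective_domRestrict ⟨(MonoidHom.ker_eq_bot_iff _).mp hbot, hL⟩

end MainTheorem

/-- **Theorem (Guralnick–Liebeck, Theorem 1).**
If `H` is a finite group with a nontrivial normal subgroup `M` such that `H/M ≅ A_k`
with `k > 20`, the extension `1 → M → H → A_k → 1` is nonsplit (no subgroup of `H` is a
complement to `M`), and `H` embeds into the symmetric group `S_ℓ`, then `ℓ ≥ k(k-1)`. -/
theorem nonsplit_extension_min_degree
    (k ℓ : ℕ) (hk : 20 < k)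
    (H : Type*) [Group H] [Finite H]
    (M : Subgroup H) [M.Normal] (hM : M ≠ ⊥)
    (iso : H ⧸ M ≃* alternatingGroup (Fin k))
    (nonsplit : ¬ ∃ K : Subgroup H, M.IsComplement' K)
    (f : H →* Equiv.Perm (Fin ℓ)) (hf : Function.Injective f) :
    k * (k - 1) ≤ ℓ := by
  have hcard : 9 ≤ Nat.card (Fin k) := by rw [Nat.card_fin]; omega
  simpa using nonsplit_extension_min_degree_general hcard M iso nonsplit f hf
end

section
/- Let p be an odd prime dividing k, k ≥ 10, G = A_k, Y ≅ S_{k-2} a Young subgroup of G stabilizing a 2-subset, and θ the nontrivial 1-dimensional 𝔽_p Y-module. Then the induced module θ↑_Y^G has socle and head both isomorphic to L = D^(k-1,1), and the quotient of its maximal submodule by its socle is isomorphic to 𝔽_p ⊕ D^(k-2,1,1). -/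
/-!
Concrete models over `F = 𝔽_p` with `p` odd, `p ∣ k`, for `G = A_k`: the induced module
`θ↑_Y^G` (for `Y ≅ S_{k-2}` the stabilizer in `G` of `{1,2}` and `θ` its sign character)
is the module of antisymmetric functions on ordered pairs of distinct points, a submodule
of the tabloid permutation module `M^(k-2,1,1)`. The Specht module `S^(k-2,1,1)` is its
submodule of antisymmetric functions with vanishing row sums, `D^λ = S^λ/(S^λ ∩ (S^λ)^⊥)`
(with the form making the tabloid basis orthonormal), and `D^(k-1,1)` is the quotient of
the zero-sum submodule of `F^k` by the constants (using `p ∣ k`).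
-/

open Equiv

/-- Permutation representation of `G` on `X → F` from an action of `G` on `X`. -/
def permRep (F G X : Type*) [CommRing F] [Group G] [MulAction G X] :
    Representation F G (X → F) where
  toFun g := LinearMap.funLeft F F (fun x => g⁻¹ • x)
  map_one' := by ext v x; simp
  map_mul' g h := by ext v x; simp [LinearMap.funLeft, mul_smul]

variable {F G V : Type*} [CommRing F] [Group G] [AddCommGroup V] [Module F V]

/-- A submodule invariant under a representation. -/
def InvSub (ρ : Representation F G V) (U : Submodule F V) : Prop :=
  ∀ g, ∀ v ∈ U, ρ g v ∈ U

/-- An irreducible (simple) invariant submodule. -/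
def IsIrreducibleSub (ρ : Representation F G V) (U : Submodule F V) : Prop :=
  InvSub ρ U ∧ U ≠ ⊥ ∧ ∀ W ≤ U, InvSub ρ W → W = ⊥ ∨ W = U

/-- The socle of the invariant submodule `S`: the sum of all irreducible invariant
submodules contained in `S`. -/
def socIn (ρ : Representation F G V) (S : Submodule F V) : Submodule F V :=
  sSup {U | U ≤ S ∧ IsIrreducibleSub ρ U}

/-- The radical of the invariant submodule `S`: the intersection of all maximal proper
invariant submodules of `S` (so `S/radIn ρ S` is the head of `S`). -/
def radIn (ρ : Representation F G V) (S : Submodule F V) : Submodule F V :=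
  sInf {U | U ≤ S ∧ InvSub ρ U ∧ U ≠ S ∧
    ∀ W, U ≤ W → W ≤ S → InvSub ρ W → W = U ∨ W = S}

/-- `S` is an indecomposable invariant submodule. -/
def IsIndecomposableSub (ρ : Representation F G V) (S : Submodule F V) : Prop :=
  ¬ ∃ U W : Submodule F V, InvSub ρ U ∧ InvSub ρ W ∧ U ≠ ⊥ ∧ W ≠ ⊥ ∧
      U ⊓ W = ⊥ ∧ U ⊔ W = S

/-- The subrepresentation on an invariant submodule. -/
def subRep (ρ : Representation F G V) (U : Submodule F V)
    (hU : InvSub ρ U) : Representation F G U where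
  toFun g := (ρ g).restrict (hU g)
  map_one' := by ext v; simp [LinearMap.restrict_apply]
  map_mul' g h := by ext v; simp [LinearMap.restrict_apply]

/-- The quotient representation on `V ⧸ U` for an invariant submodule `U`. -/
def quotRep (ρ : Representation F G V) (U : Submodule F V)
    (hU : InvSub ρ U) : Representation F G (V ⧸ U) where
  toFun g := U.mapQ U (ρ g) (fun v hv => hU g v hv)
  map_one' := by
    refine Submodule.linearMap_qext _ ?_
    ext v; simp
  map_mul' g h := by
    refine Submodule.linearMap_qext _ ?_
    ext v; simp [Submodule.mapQ_apply]

/-- Ordered pairs of distinct elements of `Fin k`, i.e. `(k-2,1,1)`-tabloids. -/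
def OP (k : ℕ) := {q : Fin k × Fin k // q.1 ≠ q.2}

instance (k : ℕ) : Fintype (OP k) := Subtype.fintype _
instance (k : ℕ) : DecidableEq (OP k) := Subtype.instDecidableEq

instance (k : ℕ) : MulAction (Equiv.Perm (Fin k)) (OP k) where
  smul g q := ⟨(g q.1.1, g q.1.2), fun hgq => q.2 (g.injective hgq)⟩
  one_smul q := by cases q; rfl
  mul_smul g h q := by cases q; rfl

/-- Transposing an ordered pair. -/
def swapOP {k : ℕ} (q : OP k) : OP k := ⟨(q.1.2, q.1.1), fun h => q.2 h.symm⟩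

/-- Antisymmetric functions on ordered pairs. -/
noncomputable def antisymSub (k : ℕ) (F : Type*) [CommRing F] : Submodule F (OP k → F) :=
  ⨅ q : OP k, LinearMap.ker
    ((LinearMap.proj q : (OP k → F) →ₗ[F] F) + LinearMap.proj (swapOP q))

/-- Functions on ordered pairs whose row sums vanish. -/
noncomputable def rowZeroSub (k : ℕ) (F : Type*) [CommRing F] : Submodule F (OP k → F) :=
  ⨅ i : Fin k, LinearMap.ker
    (∑ q ∈ Finset.univ.filter (fun q : OP k => q.1.1 = i),
      (LinearMap.proj q : (OP k → F) →ₗ[F] F))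

/-- The Specht module `S^(k-2,1,1)` inside the tabloid permutation module. -/
noncomputable def spechtHook (k : ℕ) (F : Type*) [CommRing F] : Submodule F (OP k → F) :=
  antisymSub k F ⊓ rowZeroSub k F

lemma antisym_inv (k : ℕ) (F : Type*) [CommRing F] :
    InvSub (permRep F (Equiv.Perm (Fin k)) (OP k)) (antisymSub k F) := by
  intro g v hv
  simp only [antisymSub, Submodule.mem_iInf, LinearMap.mem_ker, LinearMap.add_apply,
    LinearMap.proj_apply] at hv ⊢
  intro q
  exact hv (g⁻¹ • q)

lemma rowZero_inv (k : ℕ) (F : Type*) [CommRing F] :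
    InvSub (permRep F (Equiv.Perm (Fin k)) (OP k)) (rowZeroSub k F) := by
  intro g v hv
  simp only [rowZeroSub, Submodule.mem_iInf, LinearMap.mem_ker, LinearMap.sum_apply,
    LinearMap.proj_apply] at hv ⊢
  intro i
  rw [← hv (g⁻¹ i)]
  refine Finset.sum_nbij' (fun q => g⁻¹ • q) (fun q => g • q) ?_ ?_ ?_ ?_ ?_
  · intro q hq
    simp only [Finset.mem_filter, Finset.mem_univ, true_and] at hq ⊢
    show g⁻¹ q.1.1 = g⁻¹ i
    rw [hq]
  · intro q hq
    simp only [Finset.mem_filter, Finset.mem_univ, true_and] at hq ⊢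
    show g q.1.1 = i
    rw [hq]; simp
  · intro q _; exact smul_inv_smul g q
  · intro q _; exact inv_smul_smul g q
  · intro q _; rfl

lemma spechtHook_inv (k : ℕ) (F : Type*) [CommRing F] :
    InvSub (permRep F (Equiv.Perm (Fin k)) (OP k)) (spechtHook k F) :=
  fun g v hv => ⟨antisym_inv k F g v hv.1, rowZero_inv k F g v hv.2⟩

/-- The linear functional `v ↦ ∑_q w q * v q` (the standard bilinear form against `w`). -/
noncomputable def formMap {X : Type*} [Fintype X] [DecidableEq X] (F : Type*) [CommRing F]
    (w : X → F) : (X → F) →ₗ[F] F :=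
  ∑ q : X, w q • (LinearMap.proj q : (X → F) →ₗ[F] F)

/-- The orthogonal complement of `U` with respect to the standard form. -/
noncomputable def perpSub {X : Type*} [Fintype X] [DecidableEq X] (F : Type*) [CommRing F]
    (U : Submodule F (X → F)) : Submodule F (X → F) :=
  ⨅ w : U, LinearMap.ker (formMap F (w : X → F))

lemma spechtHook_perp_inv (k : ℕ) (F : Type*) [CommRing F] :
    InvSub (permRep F (Equiv.Perm (Fin k)) (OP k))
      (spechtHook k F ⊓ perpSub F (spechtHook k F)) := by
  intro g v hv
  refine ⟨spechtHook_inv k F g v hv.1, ?_⟩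
  have hv2 : ∀ w : (spechtHook k F), ∑ q : OP k, (w : OP k → F) q * v q = 0 := by
    intro w
    have h2 := hv.2
    rw [perpSub] at h2
    have := (Submodule.mem_iInf _).mp h2 w
    simpa only [LinearMap.mem_ker, formMap, LinearMap.sum_apply,
      LinearMap.smul_apply, LinearMap.proj_apply, smul_eq_mul] using this
  rw [perpSub]
  refine (Submodule.mem_iInf _).mpr fun w => ?_
  simp only [LinearMap.mem_ker, formMap, LinearMap.sum_apply,
    LinearMap.smul_apply, LinearMap.proj_apply, smul_eq_mul]
  have h1 : ∀ q : OP k,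
      (w : OP k → F) q * permRep F (Equiv.Perm (Fin k)) (OP k) g v q
        = (w : OP k → F) q * v (g⁻¹ • q) := fun q => rfl
  calc ∑ q : OP k, (w : OP k → F) q * permRep F (Equiv.Perm (Fin k)) (OP k) g v q
      = ∑ q : OP k, (w : OP k → F) (g • q) * v q := by
        simp only [h1]
        exact Fintype.sum_equiv (MulAction.toPerm g).symm _ _ (fun q => by
          simp [MulAction.toPerm])
    _ = 0 := by
        have hw : permRep F (Equiv.Perm (Fin k)) (OP k) g⁻¹ (w : OP k → F) ∈
            spechtHook k F := spechtHook_inv k F g⁻¹ w w.2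
        have := hv2 ⟨_, hw⟩
        rw [← this]
        exact Finset.sum_congr rfl fun q _ => by
          simp [permRep, LinearMap.funLeft, mul_comm]

/-- The sum-of-coordinates functional on `F^k`. -/
noncomputable def sumFunctional (k : ℕ) (F : Type*) [CommRing F] :
    (Fin k → F) →ₗ[F] F := ∑ i : Fin k, LinearMap.proj i

/-- The zero-sum submodule of `F^k`, i.e. the Specht module `S^(k-1,1)`. -/
noncomputable def zeroSum (k : ℕ) (F : Type*) [CommRing F] : Submodule F (Fin k → F) :=
  LinearMap.ker (sumFunctional k F)

/-- The line of constant functions in `F^k`. -/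
def constLine (k : ℕ) (F : Type*) [CommRing F] : Submodule F (Fin k → F) :=
  Submodule.span F {fun _ => (1 : F)}

lemma zeroSum_inv (k : ℕ) (F : Type*) [CommRing F] :
    InvSub (permRep F (Equiv.Perm (Fin k)) (Fin k)) (zeroSum k F) := by
  intro g v hv
  simp only [zeroSum, LinearMap.mem_ker, sumFunctional, LinearMap.sum_apply,
    LinearMap.proj_apply] at hv ⊢
  rw [← hv]
  exact Fintype.sum_equiv g⁻¹ _ _ (fun i => rfl)

lemma constLine_comap_inv (k : ℕ) (F : Type*) [CommRing F] :
    InvSub (subRep (permRep F (Equiv.Perm (Fin k)) (Fin k)) (zeroSum k F) (zeroSum_inv k F))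
      ((constLine k F).comap (zeroSum k F).subtype) := by
  intro g v hv
  simp only [Submodule.mem_comap, Submodule.subtype_apply] at hv ⊢
  rw [constLine, Submodule.mem_span_singleton] at hv ⊢
  obtain ⟨c, hc⟩ := hv
  refine ⟨c, ?_⟩
  show _ = permRep F (Equiv.Perm (Fin k)) (Fin k) g (v : Fin k → F)
  rw [← hc]
  rfl


section AltModel

variable (k p : ℕ) [Fact p.Prime]

lemma antisym_inv_alt (F : Type*) [CommRing F] :
    InvSub (permRep F (alternatingGroup (Fin k)) (OP k)) (antisymSub k F) :=
  fun g v hv => antisym_inv k F g v hv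

lemma spechtHook_inv_alt (F : Type*) [CommRing F] :
    InvSub (permRep F (alternatingGroup (Fin k)) (OP k)) (spechtHook k F) :=
  fun g v hv => spechtHook_inv k F g v hv

lemma zeroSum_inv_alt (F : Type*) [CommRing F] :
    InvSub (permRep F (alternatingGroup (Fin k)) (Fin k)) (zeroSum k F) :=
  fun g v hv => zeroSum_inv k F g v hv

lemma constLine_comap_inv_alt (F : Type*) [CommRing F] :
    InvSub (subRep (permRep F (alternatingGroup (Fin k)) (Fin k)) (zeroSum k F)
        (zeroSum_inv_alt k F))
      ((constLine k F).comap (zeroSum k F).subtype) :=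
  fun g v hv => constLine_comap_inv k F g v hv

lemma spechtHook_perp_comap_inv_alt :
    InvSub (subRep (permRep (ZMod p) (alternatingGroup (Fin k)) (OP k))
        (spechtHook k (ZMod p)) (spechtHook_inv_alt k (ZMod p)))
      ((spechtHook k (ZMod p) ⊓ perpSub (ZMod p) (spechtHook k (ZMod p))).comap
        (spechtHook k (ZMod p)).subtype) :=
  by
  intro g v hv
  simp only [Submodule.mem_comap, Submodule.subtype_apply] at hv ⊢
  exact spechtHook_perp_inv k (ZMod p) (g : Equiv.Perm (Fin k)) (v : OP k → ZMod p) hv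

/-- The irreducible module `L = D^(k-1,1)` (for `p ∣ k`): zero-sum vectors modulo
constants. -/
noncomputable def Dk11 := (zeroSum k (ZMod p)) ⧸
  ((constLine k (ZMod p)).comap (zeroSum k (ZMod p)).subtype)

noncomputable instance : AddCommGroup (Dk11 k p) :=
  inferInstanceAs (AddCommGroup ((zeroSum k (ZMod p)) ⧸
    ((constLine k (ZMod p)).comap (zeroSum k (ZMod p)).subtype)))

noncomputable instance : Module (ZMod p) (Dk11 k p) :=
  inferInstanceAs (Module (ZMod p) ((zeroSum k (ZMod p)) ⧸
    ((constLine k (ZMod p)).comap (zeroSum k (ZMod p)).subtype)))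

/-- The representation of `A_k` on `L = D^(k-1,1)`. -/
noncomputable def Dk11Rep : Representation (ZMod p) (alternatingGroup (Fin k)) (Dk11 k p) :=
  quotRep (subRep (permRep (ZMod p) (alternatingGroup (Fin k)) (Fin k)) (zeroSum k (ZMod p))
      (zeroSum_inv_alt k (ZMod p)))
    ((constLine k (ZMod p)).comap (zeroSum k (ZMod p)).subtype)
    (constLine_comap_inv_alt k (ZMod p))

/-- The irreducible module `D^(k-2,1,1) = S^(k-2,1,1)/(S ∩ S^⊥)`. -/
noncomputable def Dk211 := (spechtHook k (ZMod p)) ⧸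
  ((spechtHook k (ZMod p) ⊓ perpSub (ZMod p) (spechtHook k (ZMod p))).comap
    (spechtHook k (ZMod p)).subtype)

noncomputable instance : AddCommGroup (Dk211 k p) :=
  inferInstanceAs (AddCommGroup ((spechtHook k (ZMod p)) ⧸
    ((spechtHook k (ZMod p) ⊓ perpSub (ZMod p) (spechtHook k (ZMod p))).comap
      (spechtHook k (ZMod p)).subtype)))

noncomputable instance : Module (ZMod p) (Dk211 k p) :=
  inferInstanceAs (Module (ZMod p) ((spechtHook k (ZMod p)) ⧸
    ((spechtHook k (ZMod p) ⊓ perpSub (ZMod p) (spechtHook k (ZMod p))).comap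
      (spechtHook k (ZMod p)).subtype)))

/-- The representation of `A_k` on `D^(k-2,1,1)`. -/
noncomputable def Dk211Rep :
    Representation (ZMod p) (alternatingGroup (Fin k)) (Dk211 k p) :=
  quotRep _ _ (spechtHook_perp_comap_inv_alt k p)

end AltModel

/-!
An antisymmetric function `v` on ordered pairs is a skew-symmetric matrix, so an element of
`Λ² M` for the permutation module `M = F^k`. The coboundary `x ↦ x ∧ 1` and the row sums connect
`M` with `Λ² M`; `S = S^(k-2,1,1)` is the kernel of the row sums in `Λ² M`, and it is spanned by
the rectangles `(e_a - e_b) ∧ (e_c - e_d)`.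

The key step is James' submodule theorem for the alternating group: an invariant `W ≤ Λ² M`
contains `S` or is orthogonal to it. On `M`, the operator `2 (1 - (a b))` is given by an element
of the group algebra of the alternating group on four points. Two such elements, for the pairs
`{a, b}` and `{c, d}` and three auxiliary points, compose to the operator sending `v` to a nonzero
multiple of `⟨r, v⟩ r`, where `r = (e_a - e_b) ∧ (e_c - e_d)`. So if some rectangle pairs
nontrivially with `W`, then that rectangle, and hence each of its translates, lies in `W`.

The orthogonal complement of `S` in `Λ² M` consists of the coboundaries, and every invariant
submodule of `M` contains the zero-sum functions or is contained in the constants. Hence the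
smallest nonzero invariant submodule of `Λ² M` is the image of the zero-sum functions under the
coboundary, and the largest proper one is the preimage of the constants under the row sums. The
coboundary of a basis vector has constant row sums `-1` as `k = 0` in `F`, and it is invariant
modulo the socle; it splits off the trivial summand of the radical modulo the socle.
-/

open scoped Matrix

section Representation

variable {ρ : Representation F G V} {S T : Submodule F V}

lemma socIn_eq_of_forall_le (hT : InvSub ρ T) (hTS : T ≤ S) (hT0 : T ≠ ⊥)
    (hmin : ∀ W ≤ S, InvSub ρ W → W ≠ ⊥ → T ≤ W) : socIn ρ S = T := by
  refine le_antisymm (sSup_le ?_) (le_sSup ⟨hTS, hT, hT0, ?_⟩)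
  · rintro U ⟨hUS, hU, hU0, hirr⟩
    exact ((hirr T (hmin U hUS hU hU0) hT).resolve_left hT0).ge
  · intro W hWT hW
    exact or_iff_not_imp_left.2 fun hW0 => hWT.antisymm (hmin W (hWT.trans hTS) hW hW0)

lemma radIn_eq_of_forall_le (hT : InvSub ρ T) (hTS : T ≤ S) (hTne : T ≠ S)
    (hmax : ∀ W ≤ S, InvSub ρ W → W ≠ S → W ≤ T) : radIn ρ S = T := by
  refine le_antisymm (sInf_le ⟨hTS, hT, hTne, ?_⟩) (le_sInf ?_)
  · intro W hTW hWS hW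
    exact or_iff_not_imp_right.2 fun hWne => (hmax W hWS hW hWne).antisymm hTW
  · rintro U ⟨hUS, hU, hUne, hirr⟩
    exact ((hirr T (hmax U hUS hU hUne) hTS hT).resolve_right hTne).le

lemma exists_linearMap_quotRep {K V V' : Type*} [Field K] [AddCommGroup V] [Module K V]
    [AddCommGroup V'] [Module K V'] {ρ : Representation K G V} {ρ' : Representation K G V'}
    {S : Submodule K V} {U C : Submodule K V'} (hS : InvSub ρ S) (hU : InvSub ρ' U)
    (hC : InvSub (subRep ρ' U hU) (C.comap U.subtype)) (f : V →ₗ[K] V')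
    (hf : ∀ v ∈ S, f v ∈ U) (hρ : ∀ g, ∀ v ∈ S, f (ρ g v) - ρ' g (f v) ∈ C) :
    ∃ φ : V →ₗ[K] U ⧸ C.comap U.subtype,
      (∀ v (hv : v ∈ S), φ v = Submodule.Quotient.mk ⟨f v, hf v hv⟩) ∧
      ∀ g, ∀ v ∈ S, φ (ρ g v) = quotRep (subRep ρ' U hU) (C.comap U.subtype) hC g (φ v) := by
  obtain ⟨φ, hφ⟩ := LinearMap.exists_extend ((C.comap U.subtype).mkQ ∘ₗ f.restrict hf)
  have hφ (v) (hv : v ∈ S) : φ v = Submodule.Quotient.mk ⟨f v, hf v hv⟩ :=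
    LinearMap.congr_fun hφ ⟨v, hv⟩
  refine ⟨φ, hφ, fun g v hv => ?_⟩
  rw [hφ v hv, hφ _ (hS g v hv)]
  exact (Submodule.Quotient.eq _).2 (hρ g v hv)

end Representation

section MultipleTransitivity

variable {k : ℕ}

lemma exists_alternatingGroup_map_eq {l l' : List (Fin k)} (hl : l.Nodup) (hl' : l'.Nodup)
    (hlen : l.length = l'.length) (hk : l.length + 2 ≤ k) :
    ∃ g : alternatingGroup (Fin k), l.map (g : Perm (Fin k)) = l' := by
  have := alternatingGroup.isMultiplyPretransitive (Fin k)
  have htrans : MulAction.IsMultiplyPretransitive (alternatingGroup (Fin k)) (Fin k) l.length :=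
    MulAction.isMultiplyPretransitive_of_le (n := Nat.card (Fin k) - 2)
      (by rw [Nat.card_fin]; omega) (by simp)
  obtain ⟨g, hg⟩ := htrans.exists_smul_eq ⟨l.get, hl.injective_get⟩
    ⟨fun i => l'.get (i.cast hlen), hl'.injective_get.comp (Fin.cast_injective hlen)⟩
  refine ⟨g, List.ext_get (by simpa) fun n h₁ h₂ => ?_⟩
  rw [List.length_map] at h₁
  simpa [Subgroup.smul_def] using DFunLike.congr_fun hg ⟨n, h₁⟩

lemma exists_notMem_of_length_lt {l : List (Fin k)} (hl : l.length < k) : ∃ i, i ∉ l := by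
  by_contra! h
  have := Finset.card_le_card (fun i _ => by simpa using h i : Finset.univ ⊆ l.toFinset)
  rw [Finset.card_fin] at this
  exact (this.trans l.toFinset_card_le).not_gt hl

end MultipleTransitivity

section RootOperator

variable {ι : Type*} [DecidableEq ι] {a b c d : ι}

variable (F) in
/-- The root `e_a - e_b` of type `A`. -/
def rootVec (a b : ι) : ι → F := Pi.single a 1 - Pi.single b 1

/-- The action of `2 (1 - (a b))` on `F^ι`, written as the action of an element of the group
algebra of the alternating group on `{a, b, c, d}`, so that it makes sense for submodules that
are only invariant under even permutations. -/
def rootOperator (ρ : Representation F (Perm ι) V) (a b c d : ι) : Module.End F V :=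
  (1 - ρ (swap a b * swap b c)) * (1 + ρ (swap a d * swap b c)) * (1 - ρ (swap b c * swap a b))

lemma rootOperator_mem [Fintype ι] {ρ : Representation F (Perm ι) V} {N : Submodule F V}
    (h : [a, b, c, d].Nodup)
    (hN : ∀ g ∈ alternatingGroup ι, (∀ x ∉ [a, b, c, d], g x = x) → ∀ v ∈ N, ρ g v ∈ N)
    {v : V} (hv : v ∈ N) : rootOperator ρ a b c d v ∈ N := by
  simp only [List.nodup_cons, List.mem_cons, not_or] at h
  have hmem {x y z w : ι} (hxy : x ≠ y) (hzw : z ≠ w)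
      (hfix : ∀ i ∉ [a, b, c, d], (swap x y * swap z w) i = i) (u : V) (hu : u ∈ N) :
      ρ (swap x y * swap z w) u ∈ N :=
    hN _ (Perm.mul_mem_alternatingGroup_of_isSwap ⟨x, y, hxy, rfl⟩ ⟨z, w, hzw, rfl⟩) hfix u hu
  have h₁ := N.sub_mem hv (hmem (x := b) (y := c) (z := a) (w := b) (by tauto) (by tauto)
    (by simp +contextual [swap_apply_of_ne_of_ne]) v hv)
  have h₂ := N.add_mem h₁ (hmem (x := a) (y := d) (z := b) (w := c) (by tauto) (by tauto)
    (by simp +contextual [swap_apply_of_ne_of_ne]) _ h₁)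
  exact N.sub_mem h₂ (hmem (x := a) (y := b) (z := b) (w := c) (by tauto) (by tauto)
    (by simp +contextual [swap_apply_of_ne_of_ne]) _ h₂)

lemma map_rootOperator {V' : Type*} [AddCommGroup V'] [Module F V']
    {ρ : Representation F (Perm ι) V} {ρ' : Representation F (Perm ι) V'} (f : V →ₗ[F] V')
    (hf : ∀ g : Perm ι, (∀ x ∉ [a, b, c, d], g x = x) → ∀ v, f (ρ g v) = ρ' g (f v)) (v : V) :
    f (rootOperator ρ a b c d v) = rootOperator ρ' a b c d (f v) := by
  have h₁ := hf (swap b c * swap a b) (by simp +contextual [swap_apply_of_ne_of_ne])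
  have h₂ := hf (swap a d * swap b c) (by simp +contextual [swap_apply_of_ne_of_ne])
  have h₃ := hf (swap a b * swap b c) (by simp +contextual [swap_apply_of_ne_of_ne])
  simp only [rootOperator, Module.End.mul_apply, LinearMap.sub_apply, LinearMap.add_apply,
    Module.End.one_apply, map_sub, map_add, h₁, h₂, h₃]

lemma rootOperator_permRep_apply [Fintype ι] (h : [a, b, c, d].Nodup) (x : ι → F) :
    rootOperator (permRep F (Perm ι) ι) a b c d x =
      (2 * (rootVec F a b ⬝ᵥ x)) • rootVec F a b := by
  have hdot : rootVec F a b ⬝ᵥ x = x a - x b := by simp [rootVec, sub_dotProduct]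
  simp only [List.nodup_cons, List.mem_cons, List.not_mem_nil, not_or] at h
  obtain ⟨⟨hab, hac, had, -⟩, ⟨hbc, hbd, -⟩, ⟨hcd, -⟩, -⟩ := h
  rw [hdot]
  ext i
  simp only [rootOperator, rootVec, Module.End.mul_apply, LinearMap.sub_apply,
    LinearMap.add_apply, Module.End.one_apply, permRep, MonoidHom.coe_mk, OneHom.coe_mk,
    Pi.sub_apply, Pi.add_apply, LinearMap.funLeft_apply, mul_inv_rev, swap_inv, Perm.smul_def,
    Perm.mul_apply, Pi.smul_apply, smul_eq_mul]
  grind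

end RootOperator

section PairModule

variable {k : ℕ}

/-- The ordered pair `(i, j)` of distinct points. -/
def OP.mk (i j : Fin k) (h : i ≠ j) : OP k :=
  ⟨(i, j), h⟩

/-- The matrix of a function on ordered pairs of distinct points, with zero diagonal. -/
def pairMatrix : (OP k → F) →ₗ[F] Matrix (Fin k) (Fin k) F where
  toFun v := Matrix.of fun i j => if h : i ≠ j then v (OP.mk i j h) else 0
  map_add' v w := by ext i j; by_cases h : i = j <;> simp [h]
  map_smul' c v := by ext i j; by_cases h : i = j <;> simp [h]

/-- The function `(i, j) ↦ f i * h j - f j * h i` on ordered pairs, which represents `f ∧ h`. -/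
def wedge : (Fin k → F) →ₗ[F] (Fin k → F) →ₗ[F] OP k → F :=
  LinearMap.mk₂ F (fun f h q => f q.1.1 * h q.1.2 - f q.1.2 * h q.1.1)
    (fun _ _ _ => by ext q; simp only [Pi.add_apply]; ring)
    (fun _ _ _ => by ext q; simp only [Pi.smul_apply, smul_eq_mul]; ring)
    (fun _ _ _ => by ext q; simp only [Pi.add_apply]; ring)
    (fun _ _ _ => by ext q; simp only [Pi.smul_apply, smul_eq_mul]; ring)

/-- The coboundary `(i, j) ↦ x i - x j` of a function on points. -/
def coboundary : (Fin k → F) →ₗ[F] OP k → F :=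
  wedge.flip 1

/-- The row sums of a function on ordered pairs. -/
def rowSum : (OP k → F) →ₗ[F] Fin k → F :=
  (Matrix.mulVecBilin F F).flip 1 ∘ₗ pairMatrix

lemma pairMatrix_self (v : OP k → F) (i : Fin k) : pairMatrix v i i = 0 := by
  simp [pairMatrix]

lemma pairMatrix_of_ne (v : OP k → F) {i j : Fin k} (h : i ≠ j) :
    pairMatrix v i j = v (OP.mk i j h) :=
  dif_pos h

lemma pairMatrix_apply (v : OP k → F) (q : OP k) : pairMatrix v q.1.1 q.1.2 = v q :=
  dif_pos q.2

lemma sum_mul_eq_sum_pairMatrix (w : Fin k → Fin k → F) (v : OP k → F) :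
    ∑ q : OP k, w q.1.1 q.1.2 * v q = ∑ i, ∑ j, w i j * pairMatrix v i j := by
  rw [← Fintype.sum_prod_type' (f := fun i j => w i j * pairMatrix v i j)]
  refine Finset.sum_of_injOn Subtype.val Subtype.val_injective.injOn (fun _ _ => by simp) ?_
    fun q _ => by rw [pairMatrix_apply]
  rintro ⟨i, j⟩ - hij
  obtain rfl : i = j := by
    by_contra h
    exact hij ⟨OP.mk i j h, by simp, rfl⟩
  simp [pairMatrix_self]

lemma wedge_apply (f h : Fin k → F) (q : OP k) :
    wedge f h q = f q.1.1 * h q.1.2 - f q.1.2 * h q.1.1 :=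
  rfl

lemma coboundary_apply (x : Fin k → F) (q : OP k) : coboundary x q = x q.1.1 - x q.1.2 := by
  simp [coboundary, wedge_apply]

lemma pairMatrix_wedge (f h : Fin k → F) :
    pairMatrix (wedge f h) = Matrix.vecMulVec f h - Matrix.vecMulVec h f := by
  ext i j
  by_cases hij : i = j
  · subst hij; simp [pairMatrix_self, Matrix.vecMulVec_apply, mul_comm]
  · rw [pairMatrix_of_ne _ hij, wedge_apply]
    simp [OP.mk, Matrix.vecMulVec_apply, mul_comm]

lemma pairMatrix_permRep (g : Perm (Fin k)) (v : OP k → F) :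
    pairMatrix (permRep F (Perm (Fin k)) (OP k) g v) = (pairMatrix v).submatrix ⇑g⁻¹ ⇑g⁻¹ := by
  ext i j
  by_cases hij : i = j
  · subst hij; simp [pairMatrix_self]
  · rw [pairMatrix_of_ne _ hij, Matrix.submatrix_apply, pairMatrix_of_ne v (g⁻¹.injective.ne hij)]
    rfl

lemma permRep_wedge (g : Perm (Fin k)) (f h : Fin k → F) :
    permRep F (Perm (Fin k)) (OP k) g (wedge f h) =
      wedge (permRep F (Perm (Fin k)) (Fin k) g f) (permRep F (Perm (Fin k)) (Fin k) g h) :=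
  rfl

lemma permRep_coboundary (g : Perm (Fin k)) (x : Fin k → F) :
    permRep F (Perm (Fin k)) (OP k) g (coboundary x) =
      coboundary (permRep F (Perm (Fin k)) (Fin k) g x) :=
  rfl

lemma rowSum_apply (v : OP k → F) : rowSum v = pairMatrix v *ᵥ 1 :=
  rfl

lemma rowSum_permRep (g : Perm (Fin k)) (v : OP k → F) :
    rowSum (permRep F (Perm (Fin k)) (OP k) g v) =
      permRep F (Perm (Fin k)) (Fin k) g (rowSum v) := by
  rw [rowSum_apply, pairMatrix_permRep, Matrix.submatrix_mulVec_equiv]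
  rfl

lemma rowSum_wedge (f h : Fin k → F) : rowSum (wedge f h) = (h ⬝ᵥ 1) • f - (f ⬝ᵥ 1) • h := by
  rw [rowSum_apply, pairMatrix_wedge, Matrix.sub_mulVec, Matrix.vecMulVec_mulVec,
    Matrix.vecMulVec_mulVec]
  simp

lemma rowSum_coboundary (hk : (k : F) = 0) (x : Fin k → F) :
    rowSum (coboundary x) = -(x ⬝ᵥ 1) • 1 := by
  rw [coboundary, LinearMap.flip_apply, rowSum_wedge]
  simp [hk]

lemma mem_zeroSum_iff {x : Fin k → F} : x ∈ zeroSum k F ↔ x ⬝ᵥ 1 = 0 := by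
  simp [zeroSum, sumFunctional, dotProduct]

lemma mem_constLine_iff [NeZero k] {x : Fin k → F} : x ∈ constLine k F ↔ ∀ i j, x i = x j := by
  rw [constLine, Submodule.mem_span_singleton]
  refine ⟨?_, fun h => ⟨x 0, ?_⟩⟩
  · rintro ⟨c, rfl⟩ _ _
    rfl
  · ext i
    simp [h i 0]

lemma mem_antisymSub_iff {v : OP k → F} :
    v ∈ antisymSub k F ↔ (pairMatrix v)ᵀ = -pairMatrix v := by
  have hq (q : OP k) :
      v q + v (swapOP q) = pairMatrix v q.1.1 q.1.2 + pairMatrix v q.1.2 q.1.1 := by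
    rw [pairMatrix_apply, ← pairMatrix_apply v (swapOP q)]
    rfl
  simp only [antisymSub, Submodule.mem_iInf, LinearMap.mem_ker, LinearMap.add_apply,
    LinearMap.proj_apply, hq, ← eq_neg_iff_add_eq_zero]
  refine ⟨fun h => ?_, fun h q => congrFun₂ h q.1.2 q.1.1⟩
  ext i j
  by_cases hij : i = j
  · subst hij; simp [pairMatrix_self]
  · exact h (OP.mk j i (Ne.symm hij))

lemma mem_rowZeroSub_iff {v : OP k → F} : v ∈ rowZeroSub k F ↔ rowSum v = 0 := by
  have hrow (i : Fin k) : ∑ q : OP k with q.1.1 = i, v q = rowSum v i := by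
    rw [Finset.sum_filter]
    simpa [rowSum_apply, Matrix.mulVec, dotProduct] using
      sum_mul_eq_sum_pairMatrix (fun i' _ => if i' = i then 1 else 0) v
  simp [rowZeroSub, hrow, funext_iff]

lemma mem_spechtHook_iff {v : OP k → F} :
    v ∈ spechtHook k F ↔ v ∈ antisymSub k F ∧ rowSum v = 0 := by
  rw [spechtHook, Submodule.mem_inf, mem_rowZeroSub_iff]

lemma mem_perpSub_iff {X : Type*} [Fintype X] [DecidableEq X] {U : Submodule F (X → F)}
    {v : X → F} : v ∈ perpSub F U ↔ ∀ w ∈ U, w ⬝ᵥ v = 0 := by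
  simp [perpSub, formMap, dotProduct]

lemma wedge_mem_antisymSub (f h : Fin k → F) : wedge f h ∈ antisymSub k F := by
  rw [mem_antisymSub_iff, pairMatrix_wedge]
  simp

lemma wedge_mem_spechtHook {f h : Fin k → F} (hf : f ∈ zeroSum k F) (hh : h ∈ zeroSum k F) :
    wedge f h ∈ spechtHook k F := by
  rw [mem_spechtHook_iff, rowSum_wedge, mem_zeroSum_iff.1 hf, mem_zeroSum_iff.1 hh]
  exact ⟨wedge_mem_antisymSub f h, by simp⟩

end PairModule

section Pairing

variable {k : ℕ} {K : Type*} [Field K] [NeZero (2 : K)]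

lemma pairMatrix_swap {v : OP k → F} (hv : v ∈ antisymSub k F) (i j : Fin k) :
    pairMatrix v i j = -pairMatrix v j i :=
  congrFun₂ (mem_antisymSub_iff.1 hv) j i

lemma wedge_self (f : Fin k → F) : wedge f f = 0 := by
  ext q
  simp [wedge_apply, mul_comm]

lemma wedge_dotProduct {v : OP k → F} (hv : v ∈ antisymSub k F) (f h : Fin k → F) :
    wedge f h ⬝ᵥ v = 2 * (f ⬝ᵥ pairMatrix v *ᵥ h) := by
  have hswap : h ⬝ᵥ pairMatrix v *ᵥ f = -(f ⬝ᵥ pairMatrix v *ᵥ h) := by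
    rw [Matrix.dotProduct_mulVec, ← Matrix.mulVec_transpose, mem_antisymSub_iff.1 hv,
      Matrix.neg_mulVec, neg_dotProduct, dotProduct_comm]
  calc wedge f h ⬝ᵥ v
      = ∑ i, ∑ j, (f i * h j - f j * h i) * pairMatrix v i j :=
        sum_mul_eq_sum_pairMatrix (fun i j => f i * h j - f j * h i) v
    _ = f ⬝ᵥ pairMatrix v *ᵥ h - h ⬝ᵥ pairMatrix v *ᵥ f := by
        simp only [dotProduct, Matrix.mulVec, Finset.mul_sum, ← Finset.sum_sub_distrib]
        exact Finset.sum_congr rfl fun i _ => Finset.sum_congr rfl fun j _ => by ring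
    _ = 2 * (f ⬝ᵥ pairMatrix v *ᵥ h) := by rw [hswap]; ring

lemma rowSum_mem_zeroSum {v : OP k → K} (hv : v ∈ antisymSub k K) : rowSum v ∈ zeroSum k K := by
  have hpair := wedge_dotProduct hv 1 1
  rw [wedge_self, zero_dotProduct, ← rowSum_apply, dotProduct_comm] at hpair
  exact mem_zeroSum_iff.2 ((mul_eq_zero.1 hpair.symm).resolve_left two_ne_zero)

lemma rootVec_mem_zeroSum (a b : Fin k) : rootVec F a b ∈ zeroSum k F := by
  simp [mem_zeroSum_iff, rootVec, sub_dotProduct]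

lemma rootVec_self (a : Fin k) : rootVec F a a = 0 :=
  sub_self _

lemma permRep_rootVec (g : Perm (Fin k)) (a b : Fin k) :
    permRep F (Perm (Fin k)) (Fin k) g (rootVec F a b) = rootVec F (g a) (g b) := by
  ext i
  simp [permRep, rootVec, Pi.single_apply, symm_apply_eq]

lemma eq_sum_smul_rootVec {x : Fin k → F} (hx : x ∈ zeroSum k F) (o : Fin k) :
    x = ∑ i, x i • rootVec F i o := by
  rw [mem_zeroSum_iff, dotProduct_one] at hx
  simp only [rootVec, smul_sub, Finset.sum_sub_distrib, ← Finset.sum_smul, hx, zero_smul,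
    sub_zero]
  exact pi_eq_sum_univ' x

variable (F) in
/-- The function `(e_a - e_b) ∧ (e_c - e_d)` on ordered pairs. -/
def rectangle (a b c d : Fin k) : OP k → F :=
  wedge (rootVec F a b) (rootVec F c d)

lemma two_smul_wedge_rootVec (i j d o : Fin k) :
    (2 : F) • wedge (rootVec F i o) (rootVec F j o) =
      rectangle F i o j d + rectangle F i j d o + rectangle F j o d i := by
  ext q
  simp only [rectangle, wedge_apply, rootVec, Pi.smul_apply, Pi.add_apply, Pi.sub_apply,
    smul_eq_mul]
  ring

lemma two_smul_eq_sum_wedge {v : OP k → F} (hv : v ∈ spechtHook k F) (o : Fin k) :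
    (2 : F) • v = ∑ i, wedge (rootVec F i o) ((pairMatrix v).row i) := by
  obtain ⟨hanti, hrow⟩ := mem_spechtHook_iff.1 hv
  have hcol : ∑ i, (pairMatrix v).row i = 0 := by
    ext j
    have := congrFun hrow j
    simp only [rowSum_apply, Matrix.mulVec, dotProduct_one] at this
    simp [pairMatrix_swap hanti _ j, this]
  have hbasis : ∑ i, wedge (Pi.single i 1) ((pairMatrix v).row i) = (2 : F) • v := by
    ext q
    have := pairMatrix_swap hanti q.1.2 q.1.1
    simp [wedge_apply, Pi.single_apply, this, pairMatrix_apply, two_mul]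
  simp only [rootVec, map_sub, LinearMap.sub_apply, Finset.sum_sub_distrib, ← map_sum, hcol,
    map_zero, sub_zero, hbasis]

theorem spechtHook_eq_span_rectangle (hk : 4 ≤ k) :
    spechtHook k K =
      Submodule.span K {r | ∃ a b c d : Fin k, [a, b, c, d].Nodup ∧ rectangle K a b c d = r} := by
  refine le_antisymm (fun v hv => ?_) (Submodule.span_le.2 ?_)
  · set N := Submodule.span K {r | ∃ a b c d : Fin k, [a, b, c, d].Nodup ∧ rectangle K a b c d = r}
    have half {u : OP k → K} (hu : (2 : K) • u ∈ N) : u ∈ N :=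
      (N.smul_mem_iff two_ne_zero).1 hu
    let o : Fin k := ⟨0, by omega⟩
    have hroot (i j : Fin k) : wedge (rootVec K i o) (rootVec K j o) ∈ N := by
      by_cases hij : [i, j, o].Nodup
      · obtain ⟨d, hd⟩ := exists_notMem_of_length_lt (l := [i, j, o]) hk
        refine half ?_
        rw [two_smul_wedge_rootVec i j d o]
        refine N.add_mem (N.add_mem ?_ ?_) ?_ <;>
          exact Submodule.subset_span ⟨_, _, _, _, by grind, rfl⟩
      · obtain rfl | rfl | rfl : i = j ∨ i = o ∨ j = o := by
          simp only [List.nodup_cons, List.mem_cons, not_or] at hij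
          tauto
        all_goals simp [wedge_self, rootVec_self]
    refine half ?_
    rw [two_smul_eq_sum_wedge hv o]
    refine N.sum_mem fun i _ => ?_
    have hi : (pairMatrix v).row i ∈ zeroSum k K :=
      mem_zeroSum_iff.2 (congrFun (mem_spechtHook_iff.1 hv).2 i)
    rw [eq_sum_smul_rootVec hi o, map_sum]
    exact N.sum_mem fun j _ => by rw [map_smul]; exact N.smul_mem _ (hroot i j)
  · rintro _ ⟨a, b, c, d, -, rfl⟩
    exact wedge_mem_spechtHook (rootVec_mem_zeroSum a b) (rootVec_mem_zeroSum c d)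

theorem zeroSum_le_or_le_constLine (hk : 4 ≤ k) {N : Submodule K (Fin k → K)}
    (hN : InvSub (permRep K (alternatingGroup (Fin k)) (Fin k)) N) :
    zeroSum k K ≤ N ∨ N ≤ constLine k K := by
  have : NeZero k := ⟨by omega⟩
  refine or_iff_not_imp_right.2 fun hconst => ?_
  obtain ⟨x, hxN, hx⟩ := SetLike.not_le_iff_exists.1 hconst
  simp only [mem_constLine_iff, not_forall] at hx
  obtain ⟨a, b, hab⟩ := hx
  have hne : a ≠ b := fun h => hab (by rw [h])
  obtain ⟨c, hc⟩ := exists_notMem_of_length_lt (l := [a, b]) (lt_of_lt_of_le (by simp) hk)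
  obtain ⟨d, hd⟩ := exists_notMem_of_length_lt (l := [a, b, c]) hk
  have hmem := rootOperator_mem (ρ := permRep K (Perm (Fin k)) (Fin k)) (N := N)
    (a := a) (b := b) (c := c) (d := d) (by grind) (fun g hg _ => hN ⟨g, hg⟩) hxN
  rw [rootOperator_permRep_apply (by grind)] at hmem
  have hdot : rootVec K a b ⬝ᵥ x ≠ 0 := by simpa [rootVec, sub_dotProduct, sub_eq_zero] using hab
  have hroot := (N.smul_mem_iff (mul_ne_zero two_ne_zero hdot)).1 hmem
  have hall (i j : Fin k) : rootVec K i j ∈ N := by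
    by_cases hij : i = j
    · simp [hij, rootVec_self]
    · obtain ⟨g, hg⟩ := exists_alternatingGroup_map_eq (l := [a, b]) (l' := [i, j])
        (by simpa) (by simpa) rfl hk
      simp only [List.map_cons, List.map_nil, List.cons.injEq, and_true] at hg
      rw [← hg.1, ← hg.2, ← permRep_rootVec]
      exact hN g _ hroot
  intro y hy
  rw [eq_sum_smul_rootVec hy a]
  exact N.sum_mem fun i _ => N.smul_mem _ (hall i a)

end Pairing

section RankOne

variable {k : ℕ} {a b c d : Fin k}

lemma rootVec_apply_of_ne {x : Fin k} (ha : x ≠ a) (hb : x ≠ b) : rootVec F a b x = 0 := by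
  simp [rootVec, ha, hb]

lemma rootOperator_mem_antisymSub (h : [a, b, c, d].Nodup) {v : OP k → F}
    (hv : v ∈ antisymSub k F) :
    rootOperator (permRep F (Perm (Fin k)) (OP k)) a b c d v ∈ antisymSub k F :=
  rootOperator_mem h (fun g _ _ => antisym_inv k F g) hv

lemma pairMatrix_rootOperator_apply (h : [a, b, c, d].Nodup) {y : Fin k}
    (hy : y ∉ [a, b, c, d]) (v : OP k → F) (x : Fin k) :
    pairMatrix (rootOperator (permRep F (Perm (Fin k)) (OP k)) a b c d v) x y =
      2 * (pairMatrix v a y - pairMatrix v b y) * rootVec F a b x := by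
  let column : (OP k → F) →ₗ[F] Fin k → F :=
    (Matrix.mulVecBilin F F).flip (Pi.single y 1) ∘ₗ pairMatrix
  have hcolumn := map_rootOperator (ρ := permRep F (Perm (Fin k)) (OP k))
    (ρ' := permRep F (Perm (Fin k)) (Fin k)) (a := a) (b := b) (c := c) (d := d) column
    (fun g hg w => by
      have hgy : g.symm y = y := (symm_apply_eq g).2 (hg y hy).symm
      ext z
      calc column (permRep F (Perm (Fin k)) (OP k) g w) z
          = pairMatrix w (g.symm z) (g.symm y) := by simp [column, pairMatrix_permRep]
        _ = permRep F (Perm (Fin k)) (Fin k) g (column w) z := by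
          rw [hgy]
          simp [column, permRep]) v
  rw [rootOperator_permRep_apply h] at hcolumn
  simpa [column, rootVec, sub_dotProduct] using congrFun hcolumn x

lemma pairMatrix_rootOperator_eq_zero (h : [a, b, c, d].Nodup) {v : OP k → F}
    (hv : ∀ x ∈ [a, b, c, d], ∀ y ∈ [a, b, c, d], pairMatrix v x y = 0) :
    ∀ x ∈ [a, b, c, d], ∀ y ∈ [a, b, c, d],
      pairMatrix (rootOperator (permRep F (Perm (Fin k)) (OP k)) a b c d v) x y = 0 := by
  let N : Submodule F (OP k → F) :=
    { carrier := {w | ∀ x ∈ [a, b, c, d], ∀ y ∈ [a, b, c, d], pairMatrix w x y = 0}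
      add_mem' hu hw x hx y hy := by
        rw [map_add, Matrix.add_apply, hu x hx y hy, hw x hx y hy, add_zero]
      zero_mem' _ _ _ _ := by simp
      smul_mem' r w hw x hx y hy := by rw [map_smul, Matrix.smul_apply, hw x hx y hy, smul_zero] }
  refine rootOperator_mem (N := N) h (fun g _ hg w hw x hx y hy => ?_) hv
  have hinv {z : Fin k} (hz : z ∈ [a, b, c, d]) : g⁻¹ z ∈ [a, b, c, d] := by
    by_contra hgz
    rw [← hg _ hgz] at hgz
    exact hgz (by simpa using hz)
  rw [pairMatrix_permRep]
  exact hw _ (hinv hx) _ (hinv hy)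

lemma rectangle_dotProduct {v : OP k → F} (hv : v ∈ antisymSub k F) (a b c d : Fin k) :
    rectangle F a b c d ⬝ᵥ v =
      2 * (pairMatrix v a c - pairMatrix v b c - (pairMatrix v a d - pairMatrix v b d)) := by
  rw [rectangle, wedge_dotProduct hv]
  simp [rootVec, sub_dotProduct, Matrix.mulVec_sub]

theorem rootOperator_rootOperator_eq_smul_rectangle {e f i : Fin k}
    (h : [a, b, c, d, e, f, i].Nodup) {v : OP k → F} (hv : v ∈ antisymSub k F) :
    rootOperator (permRep F (Perm (Fin k)) (OP k)) c d f i
        (rootOperator (permRep F (Perm (Fin k)) (OP k)) a b e i v) =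
      (2 * (rectangle F a b c d ⬝ᵥ v)) • rectangle F a b c d := by
  set w := rootOperator (permRep F (Perm (Fin k)) (OP k)) a b e i v
  have hw : w ∈ antisymSub k F := rootOperator_mem_antisymSub (by grind) hv
  have hw_apply {y : Fin k} (hy : y ∉ [a, b, e, i]) (x : Fin k) : pairMatrix w x y =
      2 * (pairMatrix v a y - pairMatrix v b y) * rootVec F a b x :=
    pairMatrix_rootOperator_apply (by grind) hy v x
  set u := rootOperator (permRep F (Perm (Fin k)) (OP k)) c d f i w
  have hu : u ∈ antisymSub k F := rootOperator_mem_antisymSub (by grind) hw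
  have hout {y : Fin k} (hy : y ∉ [c, d, f, i]) (x : Fin k) : pairMatrix u x y =
      2 * (rectangle F a b c d ⬝ᵥ v) *
        (rootVec F a b x * rootVec F c d y - rootVec F a b y * rootVec F c d x) := by
    rw [pairMatrix_rootOperator_apply (by grind) hy, rectangle_dotProduct hv, pairMatrix_swap hw c,
      pairMatrix_swap hw d, hw_apply (by grind), hw_apply (by grind),
      rootVec_apply_of_ne (a := c) (b := d) (x := y) (by grind) (by grind)]
    ring
  have hrootVec {x : Fin k} (hx : x ∈ [c, d, f, i]) : rootVec F a b x = 0 :=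
    rootVec_apply_of_ne (by grind) (by grind)
  -- `w` vanishes on this block because `[a, b, e, i]` and `[c, d, f, i]` share only the point `i`.
  have hblock : ∀ x ∈ [c, d, f, i], ∀ y ∈ [c, d, f, i], pairMatrix u x y = 0 := by
    refine pairMatrix_rootOperator_eq_zero (by grind) fun x hx y hy => ?_
    by_cases hyi : y = i
    · by_cases hxi : x = i
      · rw [hxi, hyi, pairMatrix_self]
      · rw [pairMatrix_swap hw, hw_apply (by grind), hrootVec hy, mul_zero, neg_zero]
    · rw [hw_apply (by grind), hrootVec hx, mul_zero]
  ext q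
  rw [← pairMatrix_apply u, Pi.smul_apply, rectangle, wedge_apply, smul_eq_mul]
  by_cases hq₂ : q.1.2 ∈ [c, d, f, i]
  · by_cases hq₁ : q.1.1 ∈ [c, d, f, i]
    · rw [hblock _ hq₁ _ hq₂, hrootVec hq₁, hrootVec hq₂]
      ring
    · rw [pairMatrix_swap hu, hout hq₁, rectangle]
      ring
  · exact hout hq₂ q.1.1

end RankOne

section SubmoduleTheorem

variable {k : ℕ} {K : Type*} [Field K] [NeZero (2 : K)] {W : Submodule K (OP k → K)}

lemma permRep_rectangle (g : Perm (Fin k)) (a b c d : Fin k) :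
    permRep F (Perm (Fin k)) (OP k) g (rectangle F a b c d) =
      rectangle F (g a) (g b) (g c) (g d) := by
  simp only [rectangle, permRep_wedge, permRep_rootVec]

lemma exists_rectangle_dotProduct_ne_zero (hk : 4 ≤ k)
    (hW : ¬ W ≤ perpSub K (spechtHook k K)) :
    ∃ a b c d : Fin k, [a, b, c, d].Nodup ∧ ∃ v ∈ W, rectangle K a b c d ⬝ᵥ v ≠ 0 := by
  by_contra! horth
  refine hW fun v hv => mem_perpSub_iff.2 fun w hw => ?_
  rw [spechtHook_eq_span_rectangle hk] at hw
  induction hw using Submodule.span_induction with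
  | mem _ hr =>
    obtain ⟨a, b, c, d, h, rfl⟩ := hr
    exact horth a b c d h v hv
  | zero => exact zero_dotProduct v
  | add _ _ _ _ hx hy => rw [add_dotProduct, hx, hy, add_zero]
  | smul r _ _ hx => rw [smul_dotProduct, hx, smul_zero]

theorem spechtHook_le_or_le_perpSub (hk : 7 ≤ k)
    (hW : InvSub (permRep K (alternatingGroup (Fin k)) (OP k)) W) (hWanti : W ≤ antisymSub k K) :
    spechtHook k K ≤ W ∨ W ≤ perpSub K (spechtHook k K) := by
  refine or_iff_not_imp_right.2 fun hperp => ?_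
  obtain ⟨a, b, c, d, habcd, v, hv, hdot⟩ :=
    exists_rectangle_dotProduct_ne_zero (by omega) hperp
  obtain ⟨e, he⟩ := exists_notMem_of_length_lt (l := [a, b, c, d]) (lt_of_lt_of_le (by simp) hk)
  obtain ⟨f, hf⟩ := exists_notMem_of_length_lt (l := [a, b, c, d, e]) (lt_of_lt_of_le (by simp) hk)
  obtain ⟨i, hi⟩ := exists_notMem_of_length_lt (l := [a, b, c, d, e, f]) hk
  have hnodup : [a, b, c, d, e, f, i].Nodup := by
    simp only [List.nodup_cons, List.mem_cons, not_or] at habcd he hf hi ⊢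
    tauto
  have hrect : rectangle K a b c d ∈ W := by
    have hmem {x y z w : Fin k} (h : [x, y, z, w].Nodup) {u : OP k → K} (hu : u ∈ W) :
        rootOperator (permRep K (Perm (Fin k)) (OP k)) x y z w u ∈ W :=
      rootOperator_mem h (fun g hg _ => hW ⟨g, hg⟩) hu
    have := hmem (x := c) (y := d) (z := f) (w := i) (by grind)
      (hmem (x := a) (y := b) (z := e) (w := i) (by grind) hv)
    rw [rootOperator_rootOperator_eq_smul_rectangle hnodup (hWanti hv)] at this
    exact (W.smul_mem_iff (mul_ne_zero two_ne_zero hdot)).1 this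
  rw [spechtHook_eq_span_rectangle (by omega), Submodule.span_le]
  rintro _ ⟨a', b', c', d', h, rfl⟩
  obtain ⟨g, hg⟩ := exists_alternatingGroup_map_eq habcd h rfl (le_trans (by simp) hk)
  simp only [List.map_cons, List.map_nil, List.cons.injEq, and_true] at hg
  obtain ⟨rfl, rfl, rfl, rfl⟩ := hg
  rw [← permRep_rectangle]
  exact hW g _ hrect

end SubmoduleTheorem

section SocleRadical

variable {k : ℕ} {K : Type*} [Field K] {W : Submodule K (OP k → K)}

/-- The coboundaries of zero-sum functions, which form the socle of the module of antisymmetric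
functions on ordered pairs. -/
noncomputable def pairSocle (k : ℕ) (F : Type*) [CommRing F] : Submodule F (OP k → F) :=
  (zeroSum k F).map coboundary

/-- The antisymmetric functions on ordered pairs with constant row sums, which form the radical
of the module of antisymmetric functions. -/
noncomputable def pairRadical (k : ℕ) (F : Type*) [CommRing F] : Submodule F (OP k → F) :=
  (constLine k F).comap rowSum ⊓ antisymSub k F

lemma pairSocle_inv_alt :
    InvSub (permRep F (alternatingGroup (Fin k)) (OP k)) (pairSocle k F) := by
  rintro g _ ⟨x, hx, rfl⟩
  exact ⟨_, zeroSum_inv_alt k F g x hx, (permRep_coboundary _ x).symm⟩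

lemma permRep_of_mem_constLine {x : Fin k → F} (hx : x ∈ constLine k F) (g : Perm (Fin k)) :
    permRep F (Perm (Fin k)) (Fin k) g x = x := by
  obtain ⟨c, rfl⟩ := Submodule.mem_span_singleton.1 hx
  rfl

lemma rowSum_permRep_of_mem_pairRadical {v : OP k → F} (hv : v ∈ pairRadical k F)
    (g : Perm (Fin k)) : rowSum (permRep F (Perm (Fin k)) (OP k) g v) = rowSum v :=
  (rowSum_permRep g v).trans (permRep_of_mem_constLine hv.1 g)

lemma pairRadical_inv_alt :
    InvSub (permRep F (alternatingGroup (Fin k)) (OP k)) (pairRadical k F) := by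
  refine fun g v hv => ⟨?_, antisym_inv_alt k F g v hv.2⟩
  rw [SetLike.mem_coe, Submodule.mem_comap]
  exact (rowSum_permRep_of_mem_pairRadical hv g).symm ▸ hv.1

lemma coboundary_eq_zero_iff [NeZero k] {x : Fin k → F} :
    coboundary x = 0 ↔ x ∈ constLine k F := by
  simp only [mem_constLine_iff, funext_iff, coboundary_apply, Pi.zero_apply, sub_eq_zero]
  refine ⟨fun h i j => ?_, fun h q => h _ _⟩
  by_cases hij : i = j
  · rw [hij]
  · exact h (OP.mk i j hij)

lemma rowSum_wedge_single {x : Fin k → F} (hx : x ∈ zeroSum k F) (o : Fin k) :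
    rowSum (wedge x (Pi.single o 1)) = x := by
  simp [rowSum_wedge, mem_zeroSum_iff.1 hx]

lemma not_zeroSum_le_constLine [Nontrivial F] (hk : 3 ≤ k) : ¬ zeroSum k F ≤ constLine k F := by
  have : NeZero k := ⟨by omega⟩
  intro h
  have := mem_constLine_iff.1 (h (rootVec_mem_zeroSum ⟨0, by omega⟩ ⟨1, by omega⟩))
    ⟨0, by omega⟩ ⟨2, by omega⟩
  simp [rootVec] at this

lemma antisymSub_inf_perpSub [NeZero k] [NeZero (2 : K)] :
    antisymSub k K ⊓ perpSub K (spechtHook k K) = LinearMap.range coboundary := by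
  refine le_antisymm ?_ ?_
  · rintro v ⟨hv, hperp⟩
    refine ⟨fun i => pairMatrix v i 0, funext fun q => ?_⟩
    have hpair := mem_perpSub_iff.1 hperp _ (wedge_mem_spechtHook
      (rootVec_mem_zeroSum q.1.1 0) (rootVec_mem_zeroSum q.1.2 0))
    rw [← rectangle, rectangle_dotProduct hv, mul_eq_zero, or_iff_right two_ne_zero,
      pairMatrix_apply, pairMatrix_swap hv 0 q.1.2, pairMatrix_self] at hpair
    rw [coboundary_apply]
    linear_combination -hpair
  · rintro _ ⟨x, rfl⟩
    refine ⟨wedge_mem_antisymSub x 1, mem_perpSub_iff.2 fun w hw => ?_⟩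
    obtain ⟨hanti, hrow⟩ := mem_spechtHook_iff.1 hw
    rw [dotProduct_comm, coboundary, LinearMap.flip_apply, wedge_dotProduct hanti,
      ← rowSum_apply, hrow, dotProduct_zero, mul_zero]

lemma spechtHook_inf_perpSub [NeZero k] [NeZero (2 : K)] (hk : (k : K) = 0) :
    spechtHook k K ⊓ perpSub K (spechtHook k K) = pairSocle k K := by
  have hspecht (v : OP k → K) : v ∈ spechtHook k K ⊓ perpSub K (spechtHook k K) ↔
      v ∈ LinearMap.range coboundary ∧ rowSum v = 0 := by
    rw [← antisymSub_inf_perpSub, Submodule.mem_inf, mem_spechtHook_iff, Submodule.mem_inf]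
    tauto
  have hzero (x : Fin k → K) : rowSum (coboundary x) = 0 ↔ x ∈ zeroSum k K := by
    rw [rowSum_coboundary hk, mem_zeroSum_iff, smul_eq_zero, neg_eq_zero,
      or_iff_left (one_ne_zero : (1 : Fin k → K) ≠ 0)]
  ext v
  rw [hspecht]
  constructor
  · rintro ⟨⟨x, rfl⟩, hx⟩
    exact ⟨x, (hzero x).1 hx, rfl⟩
  · rintro ⟨x, hx, rfl⟩
    exact ⟨⟨x, rfl⟩, (hzero x).2 hx⟩

lemma range_coboundary_le_pairRadical (hk : (k : F) = 0) :
    LinearMap.range coboundary ≤ pairRadical k F := by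
  rintro _ ⟨x, rfl⟩
  refine ⟨?_, wedge_mem_antisymSub x 1⟩
  rw [SetLike.mem_coe, Submodule.mem_comap, rowSum_coboundary hk]
  exact Submodule.smul_mem _ _ (Submodule.mem_span_singleton_self _)

theorem pairSocle_le [NeZero (2 : K)] (hk : 7 ≤ k) (hk0 : (k : K) = 0)
    (hW : InvSub (permRep K (alternatingGroup (Fin k)) (OP k)) W) (hWanti : W ≤ antisymSub k K)
    (hW0 : W ≠ ⊥) : pairSocle k K ≤ W := by
  have : NeZero k := ⟨by omega⟩
  rcases spechtHook_le_or_le_perpSub hk hW hWanti with hspecht | hperp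
  · exact (spechtHook_inf_perpSub hk0).ge.trans (inf_le_left.trans hspecht)
  have hrange : W ≤ LinearMap.range coboundary :=
    (le_inf hWanti hperp).trans antisymSub_inf_perpSub.le
  have hinv : InvSub (permRep K (alternatingGroup (Fin k)) (Fin k)) (W.comap coboundary) :=
    fun g x hx => hW g _ hx
  rcases zeroSum_le_or_le_constLine (by omega) hinv with hzero | hconst
  · exact Submodule.map_le_iff_le_comap.2 hzero
  · refine absurd ((Submodule.eq_bot_iff W).2 fun w hw => ?_) hW0
    obtain ⟨x, rfl⟩ := hrange hw
    exact coboundary_eq_zero_iff.2 (hconst hw)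

theorem le_pairRadical [NeZero (2 : K)] (hk : 7 ≤ k) (hk0 : (k : K) = 0)
    (hW : InvSub (permRep K (alternatingGroup (Fin k)) (OP k)) W) (hWanti : W ≤ antisymSub k K)
    (hWne : W ≠ antisymSub k K) : W ≤ pairRadical k K := by
  have : NeZero k := ⟨by omega⟩
  rcases spechtHook_le_or_le_perpSub hk hW hWanti with hspecht | hperp
  · have hinv : InvSub (permRep K (alternatingGroup (Fin k)) (Fin k)) (W.map rowSum) := by
      rintro g _ ⟨w, hw, rfl⟩
      exact ⟨_, hW g w hw, rowSum_permRep _ w⟩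
    rcases zeroSum_le_or_le_constLine (by omega) hinv with hzero | hconst
    · refine absurd (hWanti.antisymm fun v hv => ?_) hWne
      obtain ⟨w, hw, hrow⟩ := hzero (rowSum_mem_zeroSum hv)
      refine (W.sub_mem_iff_left hw).1 (hspecht (mem_spechtHook_iff.2 ⟨?_, ?_⟩))
      · exact Submodule.sub_mem _ hv (hWanti hw)
      · rw [map_sub, hrow, sub_self]
    · exact le_inf (Submodule.map_le_iff_le_comap.1 hconst) hWanti
  · exact ((le_inf hWanti hperp).trans antisymSub_inf_perpSub.le).trans
      (range_coboundary_le_pairRadical hk0)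

theorem socIn_antisymSub [NeZero (2 : K)] (hk : 7 ≤ k) (hk0 : (k : K) = 0) :
    socIn (permRep K (alternatingGroup (Fin k)) (OP k)) (antisymSub k K) = pairSocle k K := by
  have : NeZero k := ⟨by omega⟩
  refine socIn_eq_of_forall_le pairSocle_inv_alt ?_ (fun hbot => ?_)
    fun W hWanti hW => pairSocle_le hk hk0 hW hWanti
  · exact Submodule.map_le_iff_le_comap.2 fun x _ => wedge_mem_antisymSub x 1
  · refine not_zeroSum_le_constLine (k := k) (F := K) (by omega) fun x hx => ?_
    refine coboundary_eq_zero_iff.1 ?_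
    exact (Submodule.eq_bot_iff _).1 hbot _ ⟨x, hx, rfl⟩

theorem radIn_antisymSub [NeZero (2 : K)] (hk : 7 ≤ k) (hk0 : (k : K) = 0) :
    radIn (permRep K (alternatingGroup (Fin k)) (OP k)) (antisymSub k K) = pairRadical k K := by
  have : NeZero k := ⟨by omega⟩
  refine radIn_eq_of_forall_le pairRadical_inv_alt inf_le_right (fun htop => ?_)
    fun W hWanti hW => le_pairRadical hk hk0 hW hWanti
  refine not_zeroSum_le_constLine (k := k) (F := K) (by omega) fun x hx => ?_
  rw [← rowSum_wedge_single hx 0]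
  exact (htop.ge (wedge_mem_antisymSub _ _)).1

end SocleRadical

section Subquotients

variable (k : ℕ) (F : Type*) [CommRing F]

lemma spechtHook_inf_perpSub_comap_inv_alt :
    InvSub (subRep (permRep F (alternatingGroup (Fin k)) (OP k)) (spechtHook k F)
        (spechtHook_inv_alt k F))
      ((spechtHook k F ⊓ perpSub F (spechtHook k F)).comap (spechtHook k F).subtype) :=
  fun g v hv => spechtHook_perp_inv k F g v hv

/-- The zero-sum functions on points modulo the constant ones. Over `ZMod p`, this is
`Dk11 k p`. -/
abbrev NaturalHeart : Type _ :=
  zeroSum k F ⧸ (constLine k F).comap (zeroSum k F).subtype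

/-- The representation of the alternating group on `NaturalHeart k F`. -/
noncomputable def naturalHeartRep :
    Representation F (alternatingGroup (Fin k)) (NaturalHeart k F) :=
  quotRep _ _ (constLine_comap_inv_alt k F)

/-- The Specht module `S^(k-2,1,1)` modulo the radical of its bilinear form. Over `ZMod p`, this
is `Dk211 k p`. -/
abbrev HookHeart : Type _ :=
  spechtHook k F ⧸ (spechtHook k F ⊓ perpSub F (spechtHook k F)).comap (spechtHook k F).subtype

/-- The representation of the alternating group on `HookHeart k F`. -/
noncomputable def hookHeartRep :
    Representation F (alternatingGroup (Fin k)) (HookHeart k F) :=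
  quotRep _ _ (spechtHook_inf_perpSub_comap_inv_alt k F)

end Subquotients

section Structure

variable {k : ℕ} {K : Type*} [Field K]

lemma exists_injective_range_eq_pairSocle [NeZero k] :
    ∃ ψ : NaturalHeart k F →ₗ[F] OP k → F, Function.Injective ψ ∧
      LinearMap.range ψ = pairSocle k F ∧
      ∀ (g : alternatingGroup (Fin k)) (x : NaturalHeart k F), ψ (naturalHeartRep k F g x) =
        permRep F (alternatingGroup (Fin k)) (OP k) g (ψ x) := by
  let f : zeroSum k F →ₗ[F] OP k → F := coboundary ∘ₗ (zeroSum k F).subtype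
  have hker : (constLine k F).comap (zeroSum k F).subtype = LinearMap.ker f :=
    Submodule.ext fun x => coboundary_eq_zero_iff.symm
  refine ⟨Submodule.liftQ _ f hker.le, ?_, ?_, ?_⟩
  · exact LinearMap.ker_eq_bot.1 (Submodule.ker_liftQ_eq_bot' _ f hker)
  · rw [Submodule.range_liftQ, LinearMap.range_comp, Submodule.range_subtype]
    rfl
  · intro g x
    induction x using Submodule.Quotient.induction_on
    rfl

lemma exists_ker_inf_antisymSub_eq_pairRadical [NeZero k] [NeZero (2 : K)] :
    ∃ φ : (OP k → K) →ₗ[K] NaturalHeart k K, (antisymSub k K).map φ = ⊤ ∧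
      LinearMap.ker φ ⊓ antisymSub k K = pairRadical k K ∧
      ∀ (g : alternatingGroup (Fin k)), ∀ v ∈ antisymSub k K,
        φ (permRep K (alternatingGroup (Fin k)) (OP k) g v) = naturalHeartRep k K g (φ v) := by
  have hrow (g : alternatingGroup (Fin k)) (v : OP k → K) :
      rowSum (permRep K (alternatingGroup (Fin k)) (OP k) g v) =
        permRep K (alternatingGroup (Fin k)) (Fin k) g (rowSum v) :=
    rowSum_permRep (g : Perm (Fin k)) v
  obtain ⟨φ, hφ, hequiv⟩ := exists_linearMap_quotRep (antisym_inv_alt k K)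
    (zeroSum_inv_alt k K) (constLine_comap_inv_alt k K) rowSum (fun _ hv => rowSum_mem_zeroSum hv)
    (fun g v _ => by rw [hrow, sub_self]; exact zero_mem _)
  refine ⟨φ, ?_, ?_, hequiv⟩
  · refine eq_top_iff.2 fun x _ => ?_
    obtain ⟨⟨x, hx⟩, rfl⟩ := Submodule.Quotient.mk_surjective _ x
    have hanti := wedge_mem_antisymSub x (Pi.single 0 1)
    refine ⟨_, hanti, ?_⟩
    rw [hφ _ hanti]
    simp only [rowSum_wedge_single hx]
  · ext v
    rw [Submodule.mem_inf, pairRadical, Submodule.mem_inf]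
    refine and_congr_left fun hv => ?_
    rw [LinearMap.mem_ker, hφ v hv, Submodule.Quotient.mk_eq_zero]
    rfl

/-- The correction of `v` by a multiple of the coboundary of the basis vector at `o` that makes
the row sums vanish when those of `v` are constant and `k = 0` in `F`. -/
noncomputable def hookPart (o : Fin k) : (OP k → F) →ₗ[F] OP k → F :=
  LinearMap.id + (LinearMap.proj o ∘ₗ rowSum).smulRight (coboundary (Pi.single o 1))

lemma hookPart_apply (o : Fin k) (v : OP k → F) :
    hookPart o v = v + rowSum v o • coboundary (Pi.single o 1) :=
  rfl

lemma rowSum_coboundary_single (hk : (k : F) = 0) (o : Fin k) :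
    rowSum (coboundary (Pi.single o 1 : Fin k → F)) = -1 := by
  simp [rowSum_coboundary hk]

lemma rowSum_eq_smul_one {v : OP k → F} (hv : v ∈ pairRadical k F) (o : Fin k) :
    rowSum v = rowSum v o • 1 := by
  have : NeZero k := ⟨o.pos.ne'⟩
  ext i
  simpa using mem_constLine_iff.1 hv.1 i o

lemma hookPart_mem_spechtHook (hk : (k : F) = 0) (o : Fin k) {v : OP k → F}
    (hv : v ∈ pairRadical k F) : hookPart o v ∈ spechtHook k F := by
  rw [mem_spechtHook_iff, hookPart_apply, map_add, map_smul, rowSum_coboundary_single hk, smul_neg,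
    ← rowSum_eq_smul_one hv o, add_neg_cancel]
  exact ⟨Submodule.add_mem _ hv.2 (Submodule.smul_mem _ _ (wedge_mem_antisymSub _ 1)), rfl⟩

lemma hookPart_permRep_sub_mem (o : Fin k) {v : OP k → F} (hv : v ∈ pairRadical k F)
    (g : Perm (Fin k)) :
    hookPart o (permRep F (Perm (Fin k)) (OP k) g v) -
      permRep F (Perm (Fin k)) (OP k) g (hookPart o v) ∈ pairSocle k F := by
  have hsingle : permRep F (Perm (Fin k)) (Fin k) g (Pi.single o 1) = Pi.single (g o) 1 := by
    ext i
    simp [permRep, Pi.single_apply, symm_apply_eq]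
  rw [hookPart_apply, hookPart_apply, rowSum_permRep_of_mem_pairRadical hv, map_add, map_smul,
    permRep_coboundary, hsingle, add_sub_add_left_eq_sub, ← smul_sub, ← map_sub]
  exact Submodule.smul_mem _ _ ⟨_, rootVec_mem_zeroSum o (g o), rfl⟩

lemma exists_mem_pairRadical_hookPart_eq (hk : (k : F) = 0) (o : Fin k) (t : F) {s : OP k → F}
    (hs : s ∈ spechtHook k F) : ∃ v ∈ pairRadical k F, rowSum v o = t ∧ hookPart o v = s := by
  obtain ⟨hanti, hrow⟩ := mem_spechtHook_iff.1 hs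
  have hrow_sub : rowSum (s - t • coboundary (Pi.single o 1)) = t • 1 := by
    rw [map_sub, map_smul, hrow, rowSum_coboundary_single hk, smul_neg, zero_sub, neg_neg]
  refine ⟨s - t • coboundary (Pi.single o 1), ⟨?_, ?_⟩, ?_, ?_⟩
  · rw [SetLike.mem_coe, Submodule.mem_comap, hrow_sub]
    exact Submodule.smul_mem _ _ (Submodule.mem_span_singleton_self _)
  · exact Submodule.sub_mem _ hanti (Submodule.smul_mem _ _ (wedge_mem_antisymSub _ 1))
  · simp [hrow_sub]
  · simp [hookPart_apply, hrow_sub]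

lemma rowSum_eq_zero_of_mem_pairSocle (hk : (k : F) = 0) {v : OP k → F}
    (hv : v ∈ pairSocle k F) : rowSum v = 0 := by
  obtain ⟨x, hx, rfl⟩ := hv
  rw [rowSum_coboundary hk, mem_zeroSum_iff.1 hx, neg_zero, zero_smul]

lemma mem_pairSocle_iff (hk : (k : F) = 0) (o : Fin k) {v : OP k → F} :
    v ∈ pairSocle k F ↔ rowSum v o = 0 ∧ hookPart o v ∈ pairSocle k F := by
  have hpart (hv : rowSum v o = 0) : hookPart o v = v := by simp [hookPart_apply, hv]
  refine ⟨fun hv => ?_, fun ⟨hrow, hv⟩ => hpart hrow ▸ hv⟩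
  have hrow : rowSum v o = 0 := congrFun (rowSum_eq_zero_of_mem_pairSocle hk hv) o
  exact ⟨hrow, (hpart hrow).symm ▸ hv⟩

lemma exists_ker_inf_pairRadical_eq_pairSocle [NeZero k] [NeZero (2 : K)] (hk : (k : K) = 0) :
    ∃ (φ₁ : (OP k → K) →ₗ[K] K) (φ₂ : (OP k → K) →ₗ[K] HookHeart k K),
      (∀ (g : alternatingGroup (Fin k)), ∀ v ∈ pairRadical k K,
        φ₁ (permRep K (alternatingGroup (Fin k)) (OP k) g v) = φ₁ v ∧
        φ₂ (permRep K (alternatingGroup (Fin k)) (OP k) g v) = hookHeartRep k K g (φ₂ v)) ∧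
      (pairRadical k K).map (φ₁.prod φ₂) = ⊤ ∧
      LinearMap.ker (φ₁.prod φ₂) ⊓ pairRadical k K = pairSocle k K := by
  have hsocle := spechtHook_inf_perpSub (K := K) hk
  obtain ⟨φ, hφ, hequiv⟩ := exists_linearMap_quotRep pairRadical_inv_alt
    (spechtHook_inv_alt k K) (spechtHook_inf_perpSub_comap_inv_alt k K) (hookPart 0)
    (fun _ hv => hookPart_mem_spechtHook hk 0 hv)
    (fun g v hv => hsocle ▸ hookPart_permRep_sub_mem 0 hv g)
  refine ⟨LinearMap.proj 0 ∘ₗ rowSum, φ, fun g v hv => ⟨?_, hequiv g v hv⟩, ?_, ?_⟩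
  · exact congrFun (rowSum_permRep_of_mem_pairRadical hv g) 0
  · refine eq_top_iff.2 fun ⟨t, s⟩ _ => ?_
    obtain ⟨⟨s, hs⟩, rfl⟩ := Submodule.Quotient.mk_surjective _ s
    obtain ⟨v, hv, hrow, rfl⟩ := exists_mem_pairRadical_hookPart_eq hk 0 t hs
    exact ⟨v, hv, Prod.ext hrow (hφ v hv)⟩
  · have hker {v : OP k → K} (hv : v ∈ pairRadical k K) :
        φ v = 0 ↔ hookPart 0 v ∈ pairSocle k K := by
      rw [hφ v hv, Submodule.Quotient.mk_eq_zero, ← hsocle]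
      rfl
    refine le_antisymm ?_ fun v hv => ?_
    · rintro v ⟨hv, hrad⟩
      obtain ⟨hrow, hpart⟩ := Prod.ext_iff.1 hv
      exact (mem_pairSocle_iff hk 0).2 ⟨hrow, (hker hrad).1 hpart⟩
    · have hrad : v ∈ pairRadical k K :=
        range_coboundary_le_pairRadical hk (LinearMap.map_le_range hv)
      obtain ⟨hrow, hpart⟩ := (mem_pairSocle_iff hk 0).1 hv
      exact ⟨Prod.ext hrow ((hker hrad).2 hpart), hrad⟩

theorem induced_module_structure_general [NeZero (2 : K)] (hk : 7 ≤ k) (hk0 : (k : K) = 0) :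
    (∃ ψ : NaturalHeart k K →ₗ[K] OP k → K, Function.Injective ψ ∧
      LinearMap.range ψ =
        socIn (permRep K (alternatingGroup (Fin k)) (OP k)) (antisymSub k K) ∧
      ∀ (g : alternatingGroup (Fin k)) (x : NaturalHeart k K), ψ (naturalHeartRep k K g x) =
        permRep K (alternatingGroup (Fin k)) (OP k) g (ψ x)) ∧
    (∃ φ : (OP k → K) →ₗ[K] NaturalHeart k K, (antisymSub k K).map φ = ⊤ ∧
      LinearMap.ker φ ⊓ antisymSub k K =
        radIn (permRep K (alternatingGroup (Fin k)) (OP k)) (antisymSub k K) ∧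
      ∀ (g : alternatingGroup (Fin k)), ∀ v ∈ antisymSub k K,
        φ (permRep K (alternatingGroup (Fin k)) (OP k) g v) = naturalHeartRep k K g (φ v)) ∧
    (∃ (φ₁ : (OP k → K) →ₗ[K] K) (φ₂ : (OP k → K) →ₗ[K] HookHeart k K),
      (∀ (g : alternatingGroup (Fin k)),
        ∀ v ∈ radIn (permRep K (alternatingGroup (Fin k)) (OP k)) (antisymSub k K),
          φ₁ (permRep K (alternatingGroup (Fin k)) (OP k) g v) = φ₁ v ∧
          φ₂ (permRep K (alternatingGroup (Fin k)) (OP k) g v) = hookHeartRep k K g (φ₂ v)) ∧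
      (radIn (permRep K (alternatingGroup (Fin k)) (OP k)) (antisymSub k K)).map
        (φ₁.prod φ₂) = ⊤ ∧
      LinearMap.ker (φ₁.prod φ₂) ⊓
          radIn (permRep K (alternatingGroup (Fin k)) (OP k)) (antisymSub k K) =
        socIn (permRep K (alternatingGroup (Fin k)) (OP k)) (antisymSub k K)) := by
  have : NeZero k := ⟨by omega⟩
  rw [socIn_antisymSub hk hk0, radIn_antisymSub hk hk0]
  exact ⟨exists_injective_range_eq_pairSocle, exists_ker_inf_antisymSub_eq_pairRadical,
    exists_ker_inf_pairRadical_eq_pairSocle hk0⟩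

end Structure

/-- **(Guralnick–Liebeck, Lemma 3.2(i).)** Let `p` be an odd prime dividing `k`,
`k ≥ 10`, `G = A_k`, `Y ≅ S_{k-2}` the stabilizer of `{1,2}`, and `θ` the nontrivial
1-dimensional `𝔽_p Y`-module. The induced module `θ↑_Y^G` (realized as the module of
antisymmetric functions on ordered pairs of distinct points) has socle and head both
isomorphic to `L = D^(k-1,1)`, and its maximal submodule (the radical) modulo its socle
is isomorphic to `𝔽_p ⊕ D^(k-2,1,1)`. -/
theorem induced_module_structure (k p : ℕ) (hk : 10 ≤ k) (hp : p.Prime) [Fact p.Prime]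
    (hodd : Odd p) (hdvd : p ∣ k) :
    -- the socle of `θ↑_Y^G` is isomorphic to `L`
    (∃ ψ : Dk11 k p →ₗ[ZMod p] (OP k → ZMod p),
      Function.Injective ψ ∧
      LinearMap.range ψ =
        socIn (permRep (ZMod p) (alternatingGroup (Fin k)) (OP k)) (antisymSub k (ZMod p)) ∧
      ∀ (g : alternatingGroup (Fin k)) (x : Dk11 k p),
        ψ (Dk11Rep k p g x)
          = permRep (ZMod p) (alternatingGroup (Fin k)) (OP k) g (ψ x)) ∧
    -- the head of `θ↑_Y^G` is isomorphic to `L`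
    (∃ φ : (OP k → ZMod p) →ₗ[ZMod p] Dk11 k p,
      (antisymSub k (ZMod p)).map φ = ⊤ ∧
      LinearMap.ker φ ⊓ antisymSub k (ZMod p) =
        radIn (permRep (ZMod p) (alternatingGroup (Fin k)) (OP k)) (antisymSub k (ZMod p)) ∧
      ∀ (g : alternatingGroup (Fin k)) (v : OP k → ZMod p), v ∈ antisymSub k (ZMod p) →
        φ (permRep (ZMod p) (alternatingGroup (Fin k)) (OP k) g v) = Dk11Rep k p g (φ v)) ∧
    -- the maximal submodule (radical) modulo the socle is isomorphic to `𝔽_p ⊕ D`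
    (∃ (φ₁ : (OP k → ZMod p) →ₗ[ZMod p] ZMod p)
       (φ₂ : (OP k → ZMod p) →ₗ[ZMod p] Dk211 k p),
      (∀ (g : alternatingGroup (Fin k)) (v : OP k → ZMod p),
        v ∈ radIn (permRep (ZMod p) (alternatingGroup (Fin k)) (OP k))
              (antisymSub k (ZMod p)) →
        φ₁ (permRep (ZMod p) (alternatingGroup (Fin k)) (OP k) g v) = φ₁ v ∧
        φ₂ (permRep (ZMod p) (alternatingGroup (Fin k)) (OP k) g v)
          = Dk211Rep k p g (φ₂ v)) ∧
      (radIn (permRep (ZMod p) (alternatingGroup (Fin k)) (OP k))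
          (antisymSub k (ZMod p))).map (φ₁.prod φ₂) = ⊤ ∧
      LinearMap.ker (φ₁.prod φ₂) ⊓
          radIn (permRep (ZMod p) (alternatingGroup (Fin k)) (OP k))
            (antisymSub k (ZMod p)) =
        socIn (permRep (ZMod p) (alternatingGroup (Fin k)) (OP k))
          (antisymSub k (ZMod p))) := by
  have : NeZero (2 : ZMod p) := ⟨Ring.two_ne_zero (by rw [ZMod.ringChar_zmod_n]; grind)⟩
  exact induced_module_structure_general (by omega) ((ZMod.natCast_eq_zero_iff k p).2 hdvd)
end
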